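/- arXiv:2501.06147 — 3 statements merged into one kernel-verified Lean document; each statement's English description precedes it below -/
import Mathlib

section
/- Let s ≥ 1/2. There exists a constant C = C(s) > 0 such that for all nonnegative sequences a, b, c : ℤ → [0,∞), the sequence F : ℤ → [0,∞] defined by F_0 = 0 and, for k ≠ 0, F_k = Σ |k|·a(k1)·b(k2)·c(k3)/|φ̃|, where the sum ranges over all triples (k1,k2,k3) ∈ Γ(k) with |k1| = max(|k|, |k1|, |k2|, |k3|), satisfies ‖F‖_{H^s} ≤ C·‖a‖_{H^{s−1/2}}·‖b‖_{H^s}·‖c‖_{H^s} (the inequality holding in [0,∞]). -/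
open scoped ENNReal

/-- The `H^s` norm of a sequence indexed by `ℤ`, with values in `[0,∞]`. -/
noncomputable def HsE (s : ℝ) (a : ℤ → ℝ≥0∞) : ℝ≥0∞ :=
  (∑' k : ℤ, ENNReal.ofReal ((1 + (k : ℝ) ^ 2) ^ s) * a k ^ 2) ^ (1 / 2 : ℝ)


noncomputable def hh (n : ℤ) : ℝ := (1 + (n : ℝ) ^ 2)⁻¹

lemma hh_pos (n : ℤ) : 0 < hh n := by unfold hh; positivity

lemma hh_summable : Summable hh := by
  have h1 : Summable (fun n : ℤ => 1 / (n : ℝ) ^ 2) :=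
    Real.summable_one_div_int_pow.2 (by norm_num)
  have h2 : Summable (fun n : ℤ => if n = 0 then (1 : ℝ) else 0) :=
    summable_of_ne_finset_zero (s := {0}) (by intro b hb; simp at hb; simp [hb])
  refine Summable.of_nonneg_of_le (fun n => (hh_pos n).le) (fun n => ?_) (h1.add h2)
  unfold hh
  by_cases hn : n = 0
  · simp [hn]
  · have : (0 : ℝ) < (n : ℝ) ^ 2 := by positivity
    simp only [hn, if_false, add_zero, one_div]
    exact inv_anti₀ this (by linarith)

noncomputable def GG (k x : ℤ) : ℝ := hh (k - x) + hh x

noncomputable def SS (k x y : ℤ) : ℝ :=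
  hh (x + y) * GG k y + hh (x + y) * GG k x + GG k x * GG k y

lemma inv_abs_sq (n : ℤ) (hn : n ≠ 0) : (|(n : ℝ)|⁻¹) ^ 2 ≤ 2 * hh n := by
  have h1 : (1 : ℝ) ≤ |(n : ℝ)| := by exact_mod_cast Int.one_le_abs hn
  have h2 : (1 : ℝ) ≤ (n : ℝ) ^ 2 := by rw [← sq_abs]; nlinarith
  unfold hh
  rw [inv_pow, sq_abs, ← div_eq_mul_inv, le_div_iff₀ (by positivity), inv_mul_le_iff₀ (by linarith)]
  linarith

lemma core_abs (K U V Z r t hu hv hw hx hy : ℝ) (hK : 0 ≤ K)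
    (U0 : 0 < U) (V0 : 0 < V) (Z0 : 0 < Z) (r0 : 0 < r) (t0 : 0 < t)
    (U1 : U ≤ 1) (V1 : V ≤ 1) (Z1 : Z ≤ 1) (r1 : r ≤ 1) (t1 : t ≤ 1)
    (hU : U ^ 2 ≤ 2 * hu) (hV : V ^ 2 ≤ 2 * hv) (hZ : Z ^ 2 ≤ 2 * hw)
    (hr : r ^ 2 = hx) (ht : t ^ 2 = hy)
    (e1 : K * U * r ≤ U + r) (e2 : K * V * t ≤ V + t)
    (e3 : K * U * V * Z ≤ (V * Z + U * Z + U * V) / 2) :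
    K ^ 3 * (U * V * Z) ^ 2 * r * t ≤
      8 * (hw * (hv + hy) + hw * (hu + hx) + (hu + hx) * (hv + hy)) := by
  have hw0 : 0 ≤ hw := by nlinarith [sq_nonneg Z]
  have q1 : (U + r) * U ≤ 4 * (hu + hx) := by nlinarith [sq_nonneg (U - r), sq_nonneg r]
  have q2 : (V + t) * V ≤ 4 * (hv + hy) := by nlinarith [sq_nonneg (V - t), sq_nonneg t]
  have q10 : 0 ≤ (U + r) * U := by positivity
  have q20 : 0 ≤ (V + t) * V := by positivity
  have g1 : 0 ≤ hu + hx := by linarith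
  have g2 : 0 ≤ hv + hy := by linarith
  have p : K ^ 3 * (U * V * Z) ^ 2 * r * t = (K * U * r) * (K * V * t) * (K * U * V * Z) * Z := by
    ring
  rw [p]
  have b1 : (K * U * r) * (K * V * t) * (K * U * V * Z) * Z ≤
      (U + r) * (V + t) * ((V * Z + U * Z + U * V) / 2) * Z := by
    gcongr
  refine b1.trans ?_
  have c1 : (U + r) * ((V + t) * V) * Z ^ 2 ≤ 2 * (4 * (hv + hy)) * (2 * hw) := by
    gcongr; linarith
  have c2 : (V + t) * ((U + r) * U) * Z ^ 2 ≤ 2 * (4 * (hu + hx)) * (2 * hw) := by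
    gcongr; linarith
  have c3 : ((U + r) * U) * ((V + t) * V) * Z ≤ (4 * (hu + hx)) * (4 * (hv + hy)) * 1 := by
    gcongr
  nlinarith

lemma core (k x y : ℤ) (hu : k - x ≠ 0) (hv : k - y ≠ 0) (hw : x + y ≠ 0) :
    |(k : ℝ)| ^ 3 ≤ 8 * SS k x y * ((((k - x : ℤ) : ℝ)) * ((k - y : ℤ) : ℝ) * ((x + y : ℤ) : ℝ)) ^ 2
      * (√(1 + (x : ℝ) ^ 2) * √(1 + (y : ℝ) ^ 2)) := by
  have one (n : ℤ) (hn : n ≠ 0) : (1 : ℝ) ≤ |(n : ℝ)| := by exact_mod_cast Int.one_le_abs hn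
  have hR (n : ℤ) : (1 : ℝ) ≤ √(1 + (n : ℝ) ^ 2) := by
    rw [Real.one_le_sqrt]; nlinarith [sq_nonneg (n : ℝ)]
  have hR2 (n : ℤ) : |(n : ℝ)| ≤ √(1 + (n : ℝ) ^ 2) := by
    apply Real.le_sqrt_of_sq_le; rw [sq_abs]; linarith
  have hR3 (n : ℤ) : ((√(1 + (n : ℝ) ^ 2))⁻¹) ^ 2 = hh n := by
    rw [inv_pow, Real.sq_sqrt (by positivity)]; rfl
  have ou := one _ hu
  have ov := one _ hv
  have ow := one _ hw
  have rx := hR x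
  have ry := hR y
  have tri (z : ℤ) : |(k : ℝ)| ≤ |((k - z : ℤ) : ℝ)| + |(z : ℝ)| := by
    have := abs_add_le (((k - z : ℤ) : ℝ)) (z : ℝ)
    simpa using this
  have tri3 : 2 * |(k : ℝ)| ≤ |((k - x : ℤ) : ℝ)| + |((k - y : ℤ) : ℝ)| + |((x + y : ℤ) : ℝ)| := by
    have := abs_add_three (((k - x : ℤ) : ℝ)) ((k - y : ℤ) : ℝ) ((x + y : ℤ) : ℝ)
    have e : ((k - x : ℤ) : ℝ) + ((k - y : ℤ) : ℝ) + ((x + y : ℤ) : ℝ) = 2 * k := by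
      push_cast; ring
    rw [e, abs_mul] at this
    simpa using this
  have tx := (tri x).trans (add_le_add_right (hR2 x) _)
  have ty := (tri y).trans (add_le_add_right (hR2 y) _)
  have iu := inv_abs_sq _ hu
  have iv := inv_abs_sq _ hv
  have iw := inv_abs_sq _ hw
  have r3x := hR3 x
  have r3y := hR3 y
  have sqe : ((((k - x : ℤ) : ℝ)) * ((k - y : ℤ) : ℝ) * ((x + y : ℤ) : ℝ)) ^ 2 =
     (|((k - x : ℤ) : ℝ)| * |((k - y : ℤ) : ℝ)| * |((x + y : ℤ) : ℝ)|) ^ 2 := by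
    rw [← abs_mul, ← abs_mul, sq_abs]
  rw [sqe]
  unfold SS GG
  have hK := abs_nonneg (k : ℝ)
  generalize |((k - x : ℤ) : ℝ)| = u at *
  generalize |((k - y : ℤ) : ℝ)| = v at *
  generalize |((x + y : ℤ) : ℝ)| = w at *
  generalize √(1 + (x : ℝ) ^ 2) = X at *
  generalize √(1 + (y : ℝ) ^ 2) = Y at *
  generalize |(k : ℝ)| = K at *
  have u0 : 0 < u := by linarith
  have v0 : 0 < v := by linarith
  have w0 : 0 < w := by linarith
  have X0 : 0 < X := by linarith
  have Y0 : 0 < Y := by linarith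
  have key := core_abs K u⁻¹ v⁻¹ w⁻¹ X⁻¹ Y⁻¹ (hh (k - x)) (hh (k - y)) (hh (x + y)) (hh x) (hh y) hK
    (by positivity) (by positivity) (by positivity) (by positivity) (by positivity)
    (inv_le_one_of_one_le₀ ou) (inv_le_one_of_one_le₀ ov) (inv_le_one_of_one_le₀ ow)
    (inv_le_one_of_one_le₀ rx) (inv_le_one_of_one_le₀ ry) iu iv iw r3x r3y
    (by
      have : u⁻¹ + X⁻¹ = (u + X) * u⁻¹ * X⁻¹ := by field_simp; ring
      rw [this]; gcongr)
    (by
      have : v⁻¹ + Y⁻¹ = (v + Y) * v⁻¹ * Y⁻¹ := by field_simp; ring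
      rw [this]; gcongr)
    (by
      have : (v⁻¹ * w⁻¹ + u⁻¹ * w⁻¹ + u⁻¹ * v⁻¹) / 2 = ((u + v + w) / 2) * u⁻¹ * v⁻¹ * w⁻¹ := by
        field_simp
      rw [this]; gcongr; linarith)
  have e : K ^ 3 = (K ^ 3 * (u⁻¹ * v⁻¹ * w⁻¹) ^ 2 * X⁻¹ * Y⁻¹) * ((u * v * w) ^ 2 * (X * Y)) := by
    field_simp
  rw [e]
  calc _ ≤ _ := mul_le_mul_of_nonneg_right key (by positivity)
    _ = _ := by ring

lemma SS_nonneg (k x y : ℤ) : 0 ≤ SS k x y := by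
  have := hh_pos
  unfold SS GG
  have h1 := this (k - x)
  have h2 := this (k - y)
  have h3 := this x
  have h4 := this y
  have h5 := this (x + y)
  positivity

lemma core_s (s : ℝ) (hs : 1 / 2 ≤ s) (k l x y : ℤ) (hk : k ≠ 0) (hu : k - x ≠ 0) (hv : k - y ≠ 0)
    (hw : x + y ≠ 0) (hl : |(k : ℝ)| ≤ |(l : ℝ)|) :
    (1 + (k : ℝ) ^ 2) ^ s * (k : ℝ) ^ 2 ≤
      16 * SS k x y * ((((k - x : ℤ) : ℝ)) * ((k - y : ℤ) : ℝ) * ((x + y : ℤ) : ℝ)) ^ 2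
      * ((1 + (l : ℝ) ^ 2) ^ (s - 1 / 2) * (1 + (x : ℝ) ^ 2) ^ s * (1 + (y : ℝ) ^ 2) ^ s) := by
  have hc := core k x y hu hv hw
  have hW (n : ℤ) : √(1 + (n : ℝ) ^ 2) ≤ (1 + (n : ℝ) ^ 2) ^ s := by
    rw [Real.sqrt_eq_rpow]
    exact Real.rpow_le_rpow_of_exponent_le (by nlinarith [sq_nonneg (n : ℝ)]) hs
  have hkl : (1 + (k : ℝ) ^ 2) ^ (s - 1 / 2) ≤ (1 + (l : ℝ) ^ 2) ^ (s - 1 / 2) := by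
    apply Real.rpow_le_rpow (by positivity) _ (by linarith)
    have := sq_le_sq.2 hl
    linarith
  have hk1 : (1 : ℝ) ≤ |(k : ℝ)| := by exact_mod_cast Int.one_le_abs hk
  have hk2 : √(1 + (k : ℝ) ^ 2) ≤ 2 * |(k : ℝ)| := by
    rw [Real.sqrt_le_left (by positivity), mul_pow, sq_abs]
    have : (1 : ℝ) ≤ (k : ℝ) ^ 2 := by rw [← sq_abs]; nlinarith
    linarith
  have e : (1 + (k : ℝ) ^ 2) ^ s = (1 + (k : ℝ) ^ 2) ^ (s - 1 / 2) * √(1 + (k : ℝ) ^ 2) := by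
    rw [Real.sqrt_eq_rpow, ← Real.rpow_add (by positivity)]; congr 1; ring
  have hS := SS_nonneg k x y
  rw [e]
  calc (1 + (k : ℝ) ^ 2) ^ (s - 1 / 2) * √(1 + (k : ℝ) ^ 2) * (k : ℝ) ^ 2
      ≤ (1 + (l : ℝ) ^ 2) ^ (s - 1 / 2) * (2 * |(k : ℝ)|) * (k : ℝ) ^ 2 := by gcongr
    _ = (1 + (l : ℝ) ^ 2) ^ (s - 1 / 2) * (2 * |(k : ℝ)| ^ 3) := by rw [← sq_abs (k : ℝ)]; ring
    _ ≤ (1 + (l : ℝ) ^ 2) ^ (s - 1 / 2) * (2 * (8 * SS k x y *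
        ((((k - x : ℤ) : ℝ)) * ((k - y : ℤ) : ℝ) * ((x + y : ℤ) : ℝ)) ^ 2
      * ((1 + (x : ℝ) ^ 2) ^ s * (1 + (y : ℝ) ^ 2) ^ s))) := by
        gcongr
        refine hc.trans ?_
        gcongr
        · exact hW x
        · exact hW y
    _ = _ := by ring

lemma cs {ι : Type*} [MeasurableSpace ι] [MeasurableSingletonClass ι] [DiscreteMeasurableSpace ι]
    (t f g : ι → ℝ≥0∞) (h : ∀ i, t i ^ 2 ≤ f i * g i) :
    (∑' i, t i) ^ 2 ≤ (∑' i, f i) * ∑' i, g i := by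
  have h1 (i) : t i ≤ f i ^ (1 / 2 : ℝ) * g i ^ (1 / 2 : ℝ) := by
    rw [← ENNReal.mul_rpow_of_nonneg _ _ (by norm_num)]
    calc t i = (t i ^ 2) ^ (1 / 2 : ℝ) := by
          rw [← ENNReal.rpow_natCast, ← ENNReal.rpow_mul]; norm_num
      _ ≤ _ := ENNReal.rpow_le_rpow (h i) (by norm_num)
  have h2 := ENNReal.lintegral_mul_le_Lp_mul_Lq (MeasureTheory.Measure.count : MeasureTheory.Measure ι)
    Real.HolderConjugate.two_two (f := fun i => f i ^ (1 / 2 : ℝ)) (g := fun i => g i ^ (1 / 2 : ℝ))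
    Measurable.of_discrete.aemeasurable Measurable.of_discrete.aemeasurable
  simp only [MeasureTheory.lintegral_count, Pi.mul_apply, ← ENNReal.rpow_mul] at h2
  norm_num at h2
  calc (∑' i, t i) ^ 2 ≤ ((∑' i, f i) ^ (1 / 2 : ℝ) * (∑' i, g i) ^ (1 / 2 : ℝ)) ^ 2 := by
        gcongr
        refine (ENNReal.tsum_le_tsum h1).trans ?_
        simpa using h2
    _ = _ := by
        rw [mul_pow, ← ENNReal.rpow_natCast, ← ENNReal.rpow_natCast, ← ENNReal.rpow_mul,
          ← ENNReal.rpow_mul]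
        norm_num

noncomputable def hE (n : ℤ) : ℝ≥0∞ := ENNReal.ofReal (hh n)

lemma hE_fin : ∑' n, hE n ≠ ∞ := hh_summable.tsum_ofReal_ne_top

lemma SS_sum (k : ℤ) : ∑' q : ℤ × ℤ, ENNReal.ofReal (SS k q.1 q.2) ≤ 8 * (∑' n, hE n) ^ 2 := by
  have e (x y : ℤ) : ENNReal.ofReal (SS k x y) =
      hE (x + y) * (hE (k - y) + hE y) + hE (x + y) * (hE (k - x) + hE x)
      + (hE (k - x) + hE x) * (hE (k - y) + hE y) := by
    have p := fun n => (hh_pos n).le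
    have g (z) : 0 ≤ GG k z := add_nonneg (p _) (p _)
    unfold SS hE
    rw [ENNReal.ofReal_add (add_nonneg (mul_nonneg (p _) (g _)) (mul_nonneg (p _) (g _)))
      (mul_nonneg (g _) (g _)), ENNReal.ofReal_add (mul_nonneg (p _) (g _)) (mul_nonneg (p _) (g _)),
      ENNReal.ofReal_mul (p _), ENNReal.ofReal_mul (p _), ENNReal.ofReal_mul (g _)]
    unfold GG
    rw [ENNReal.ofReal_add (p _) (p _), ENNReal.ofReal_add (p _) (p _)]
  have t1 (y : ℤ) : ∑' x, hE (x + y) = ∑' n, hE n := (Equiv.addRight y).tsum_eq hE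
  have t2 (x : ℤ) : ∑' y, hE (x + y) = ∑' n, hE n := (Equiv.addLeft x).tsum_eq hE
  have t3 : ∑' y, hE (k - y) = ∑' n, hE n := (Equiv.subLeft k).tsum_eq hE
  have t4 : ∑' y, (hE (k - y) + hE y) = 2 * ∑' n, hE n := by
    rw [ENNReal.tsum_add, t3, two_mul]
  simp_rw [e]
  rw [ENNReal.tsum_add, ENNReal.tsum_add]
  apply le_of_eq
  have s1 : ∑' q : ℤ × ℤ, hE (q.1 + q.2) * (hE (k - q.2) + hE q.2) = 2 * (∑' n, hE n) ^ 2 := by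
    rw [ENNReal.tsum_prod', ENNReal.tsum_comm]
    simp_rw [ENNReal.tsum_mul_right, t1, ENNReal.tsum_mul_left, t4]; ring
  have s2 : ∑' q : ℤ × ℤ, hE (q.1 + q.2) * (hE (k - q.1) + hE q.1) = 2 * (∑' n, hE n) ^ 2 := by
    rw [ENNReal.tsum_prod']
    simp_rw [ENNReal.tsum_mul_right, t2, ENNReal.tsum_mul_left, t4]; ring
  have s3 : ∑' q : ℤ × ℤ, (hE (k - q.1) + hE q.1) * (hE (k - q.2) + hE q.2)
      = 4 * (∑' n, hE n) ^ 2 := by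
    rw [ENNReal.tsum_prod']
    simp_rw [ENNReal.tsum_mul_left, t4, ENNReal.tsum_mul_right, t4]; ring
  rw [s1, s2, s3]; ring

noncomputable def wE (s : ℝ) (n : ℤ) : ℝ≥0∞ := ENNReal.ofReal ((1 + (n : ℝ) ^ 2) ^ s)

lemma term_bound (s : ℝ) (hs : 1 / 2 ≤ s) (a b c : ℤ → NNReal) (k l x y : ℤ) (hk : k ≠ 0)
    (hsum : l + x + y = k) (hne : (l + x) * (l + y) * (x + y) ≠ 0) (hl : k.natAbs ≤ l.natAbs) :
    wE s k * ((k.natAbs : ℝ≥0∞) * (a l : ℝ≥0∞) * (b x : ℝ≥0∞) * (c y : ℝ≥0∞) /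
      ((3 * (l + x) * (l + y) * (x + y)).natAbs : ℝ≥0∞)) ^ 2 ≤
    (16 * ENNReal.ofReal (SS k x y)) * ((wE (s - 1 / 2) l * (a l : ℝ≥0∞) ^ 2) *
      ((wE s x * (b x : ℝ≥0∞) ^ 2) * (wE s y * (c y : ℝ≥0∞) ^ 2))) := by
  have e1 : l + x = k - y := by omega
  have e2 : l + y = k - x := by omega
  rw [e1, e2] at hne ⊢
  have hv : k - y ≠ 0 := by rintro h; simp [h] at hne
  have hu : k - x ≠ 0 := by rintro h; simp [h] at hne
  have hw : x + y ≠ 0 := by rintro h; simp [h] at hne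
  have hl' : |(k : ℝ)| ≤ |(l : ℝ)| := by
    have : |k| ≤ |l| := by rw [Int.abs_eq_natAbs, Int.abs_eq_natAbs]; exact_mod_cast hl
    exact_mod_cast this
  have hc := core_s s hs k l x y hk hu hv hw hl'
  have nat (n : ℤ) : (n.natAbs : ℝ≥0∞) = ENNReal.ofReal |(n : ℝ)| := by
    rw [← ENNReal.ofReal_natCast, Nat.cast_natAbs, Int.cast_abs]
  have nn (z : NNReal) : (z : ℝ≥0∞) = ENNReal.ofReal (z : ℝ) := (ENNReal.ofReal_coe_nnreal).symm
  have hS := SS_nonneg k x y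
  have hD0 : (3 * (k - y) * (k - x) * (x + y)) ≠ 0 := by
    simp [hu, hv, hw]
  have hD : 0 < |((3 * (k - y) * (k - x) * (x + y) : ℤ) : ℝ)| := by
    rw [abs_pos]; exact_mod_cast hD0
  have s16 : (16 : ℝ≥0∞) = ENNReal.ofReal 16 := by norm_num
  unfold wE
  rw [nat, nat, nn, nn, nn, s16]
  have ha := (a l).coe_nonneg
  have hb := (b x).coe_nonneg
  have hcc := (c y).coe_nonneg
  rw [← ENNReal.ofReal_mul (by positivity), ← ENNReal.ofReal_mul (by positivity),
    ← ENNReal.ofReal_mul (by positivity), ← ENNReal.ofReal_div_of_pos hD,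
    ← ENNReal.ofReal_pow (by positivity), ← ENNReal.ofReal_pow (by positivity),
    ← ENNReal.ofReal_pow (by positivity), ← ENNReal.ofReal_pow (by positivity),
    ← ENNReal.ofReal_mul (by positivity), ← ENNReal.ofReal_mul (by positivity),
    ← ENNReal.ofReal_mul (by positivity), ← ENNReal.ofReal_mul (by positivity),
    ← ENNReal.ofReal_mul (by positivity), ← ENNReal.ofReal_mul (by positivity),
    ← ENNReal.ofReal_mul (by positivity), ← ENNReal.ofReal_mul (by positivity)]
  apply ENNReal.ofReal_le_ofReal
  rw [div_pow, ← mul_div_assoc, div_le_iff₀ (by positivity)]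
  simp only [mul_pow, sq_abs] at hc ⊢
  push_cast at hc ⊢
  have h3 := mul_le_mul_of_nonneg_right hc
    (show (0 : ℝ) ≤ ((a l : ℝ) * (b x : ℝ) * (c y : ℝ)) ^ 2 by positivity)
  calc _ = _ := by ring
    _ ≤ _ := h3
    _ ≤ 9 * _ := le_mul_of_one_le_left (by positivity) (by norm_num)
    _ = _ := by ring

theorem stmt8 (s : ℝ) (hs : 1 / 2 ≤ s) :
    ∃ C : ℝ, 0 < C ∧ ∀ a b c : ℤ → NNReal,
      HsE s (fun k =>
        if k = 0 then 0 else
          ∑' p : ℤ × ℤ × ℤ,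
            if p.1 + p.2.1 + p.2.2 = k ∧
               (p.1 + p.2.1) * (p.1 + p.2.2) * (p.2.1 + p.2.2) ≠ 0 ∧
               p.1.natAbs = max k.natAbs (max p.1.natAbs (max p.2.1.natAbs p.2.2.natAbs))
            then (k.natAbs : ℝ≥0∞) * (a p.1 : ℝ≥0∞) * (b p.2.1 : ℝ≥0∞) * (c p.2.2 : ℝ≥0∞) /
                (((3 * (p.1 + p.2.1) * (p.1 + p.2.2) * (p.2.1 + p.2.2)).natAbs : ℝ≥0∞))
            else 0)
      ≤ ENNReal.ofReal C * HsE (s - 1 / 2) (fun k => (a k : ℝ≥0∞)) *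
          HsE s (fun k => (b k : ℝ≥0∞)) * HsE s (fun k => (c k : ℝ≥0∞)) := by
  set D : ℝ≥0∞ := 16 * (8 * (∑' n, hE n) ^ 2) with hD
  have hDf : D ≠ ∞ := by
    rw [hD]
    exact ENNReal.mul_ne_top (by norm_num) (ENNReal.mul_ne_top (by norm_num)
      (ENNReal.pow_ne_top hE_fin))
  have hDf2 : D ^ (1 / 2 : ℝ) ≠ ∞ := ENNReal.rpow_ne_top_of_nonneg (by norm_num) hDf
  refine ⟨(D ^ (1 / 2 : ℝ)).toReal + 1, by positivity, fun a b c => ?_⟩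
  have hC : D ^ (1 / 2 : ℝ) ≤ ENNReal.ofReal ((D ^ (1 / 2 : ℝ)).toReal + 1) := by
    rw [ENNReal.le_ofReal_iff_toReal_le hDf2 (by positivity)]; linarith
  set P : ℤ × ℤ × ℤ → ℝ≥0∞ := fun p => (wE (s - 1 / 2) p.1 * (a p.1 : ℝ≥0∞) ^ 2) *
      ((wE s p.2.1 * (b p.2.1 : ℝ≥0∞) ^ 2) * (wE s p.2.2 * (c p.2.2 : ℝ≥0∞) ^ 2)) with hP
  have hPsum : ∑' p, P p = (∑' k, wE (s - 1 / 2) k * (a k : ℝ≥0∞) ^ 2) *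
      ((∑' k, wE s k * (b k : ℝ≥0∞) ^ 2) * (∑' k, wE s k * (c k : ℝ≥0∞) ^ 2)) := by
    rw [ENNReal.tsum_prod']
    simp_rw [hP, ENNReal.tsum_mul_left]
    rw [ENNReal.tsum_mul_right, ENNReal.tsum_prod']
    simp_rw [ENNReal.tsum_mul_left]
    rw [ENNReal.tsum_mul_right]
  unfold HsE
  refine le_trans (ENNReal.rpow_le_rpow (z := 1 / 2)
    (show _ ≤ D * ∑' p, P p from ?_) (by norm_num)) ?_
  · have hswap : ∑' p, P p = ∑' k : ℤ, ∑' p : ℤ × ℤ × ℤ,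
        if p.1 + p.2.1 + p.2.2 = k then P p else 0 := by
      rw [ENNReal.tsum_comm]
      congr 1; ext p
      rw [tsum_eq_single (p.1 + p.2.1 + p.2.2)]
      · simp
      · intro k hk; simp [hk.symm]
    rw [hswap, ← ENNReal.tsum_mul_left]
    refine ENNReal.tsum_le_tsum fun k => ?_
    by_cases hk : k = 0
    · simp [hk]
    simp only [hk, if_false]
    have hq : ENNReal.ofReal ((1 + (k : ℝ) ^ 2) ^ s) = (wE s k ^ (1 / 2 : ℝ)) ^ 2 := by
      rw [← ENNReal.rpow_natCast, ← ENNReal.rpow_mul]; norm_num [wE]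
    rw [hq, ← mul_pow, ← ENNReal.tsum_mul_left]
    refine (cs _ (fun p : ℤ × ℤ × ℤ => if p.1 + p.2.1 + p.2.2 = k then
      16 * ENNReal.ofReal (SS k p.2.1 p.2.2) else 0)
      (fun p : ℤ × ℤ × ℤ => if p.1 + p.2.1 + p.2.2 = k then P p else 0) ?_).trans ?_
    · intro p
      rw [mul_pow, ← hq]
      split_ifs with h1 h2 h2
      · exact term_bound s hs a b c k p.1 p.2.1 p.2.2 hk h1.1 h1.2.1 (by omega)
      · exact absurd h1.1 h2
      · simp
      · simp
    · gcongr
      rw [ENNReal.tsum_prod', ENNReal.tsum_comm]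
      have (q : ℤ × ℤ) : (∑' l : ℤ, if l + q.1 + q.2 = k then
          16 * ENNReal.ofReal (SS k q.1 q.2) else 0) = 16 * ENNReal.ofReal (SS k q.1 q.2) := by
        rw [tsum_eq_single (k - q.1 - q.2)]
        · rw [if_pos (by ring)]
        · intro l hl; rw [if_neg (by omega)]
      simp_rw [this]
      rw [ENNReal.tsum_mul_left, hD]
      gcongr
      exact SS_sum k
  · clear_value D
    rw [hPsum, ENNReal.mul_rpow_of_nonneg _ _ (by norm_num),
      ENNReal.mul_rpow_of_nonneg _ _ (by norm_num), ENNReal.mul_rpow_of_nonneg _ _ (by norm_num),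
      ← mul_assoc, ← mul_assoc]
    unfold wE
    gcongr
end

section
/- For every T > 0 and every R > 0 there exists a constant C > 0 such that the following holds: for every ε ∈ (0,1] and every C^∞ function u : ℝ × ℝ → ℝ which is 2π-periodic in its second variable, satisfies the KdV–Burgers equation ∂_t u + ∂_x³ u − ε ∂_x² u = ∂_x(u²) at every point of [0,T] × ℝ, and whose initial data satisfies ∫₀^{2π} (u(0,x)² + (∂_x u(0,x))²) dx ≤ R², one has sup_{t ∈ [0,T]} (∫₀^{2π} (u(t,x)² + (∂_x u(t,x))²) dx)^{1/2} + ε^{1/2}·(∫₀ᵀ ∫₀^{2π} (∂_x² u(τ,x))² dx dτ)^{1/2} ≤ C. -/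
open Real in
theorem aux_dx {f : ℝ → ℝ → ℝ} (hf : ContDiff ℝ (⊤ : ℕ∞) (fun p : ℝ × ℝ => f p.1 p.2)) (t x : ℝ) :
    HasDerivAt (f t) (fderiv ℝ (fun p : ℝ × ℝ => f p.1 p.2) (t, x) (0, 1)) x := by
  have h1 : HasFDerivAt (fun p : ℝ × ℝ => f p.1 p.2) _ (t, x) :=
    (hf.differentiable (by simp) (t, x)).hasFDerivAt
  have h2 : HasDerivAt (fun y : ℝ => (t, y)) ((0 : ℝ), (1 : ℝ)) x :=
    (hasDerivAt_const x t).prodMk (hasDerivAt_id x)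
  exact h1.comp_hasDerivAt x h2

theorem aux_dt {f : ℝ → ℝ → ℝ} (hf : ContDiff ℝ (⊤ : ℕ∞) (fun p : ℝ × ℝ => f p.1 p.2)) (t x : ℝ) :
    HasDerivAt (fun τ => f τ x) (fderiv ℝ (fun p : ℝ × ℝ => f p.1 p.2) (t, x) (1, 0)) t := by
  have h1 : HasFDerivAt (fun p : ℝ × ℝ => f p.1 p.2) _ (t, x) :=
    (hf.differentiable (by simp) (t, x)).hasFDerivAt
  have h2 : HasDerivAt (fun y : ℝ => (y, x)) ((1 : ℝ), (0 : ℝ)) t :=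
    (hasDerivAt_id t).prodMk (hasDerivAt_const t x)
  exact h1.comp_hasDerivAt t h2

theorem aux_sm {f : ℝ → ℝ → ℝ} (hf : ContDiff ℝ (⊤ : ℕ∞) (fun p : ℝ × ℝ => f p.1 p.2)) (e : ℝ × ℝ) :
    ContDiff ℝ (⊤ : ℕ∞) (fun p : ℝ × ℝ => fderiv ℝ (fun p : ℝ × ℝ => f p.1 p.2) (p.1, p.2) e) := by
  have h := hf.fderiv_right (m := (⊤ : ℕ∞)) (by simp)
  exact h.clm_apply contDiff_const

theorem aux_comm {f : ℝ → ℝ → ℝ} (hf : ContDiff ℝ (⊤ : ℕ∞) (fun p : ℝ × ℝ => f p.1 p.2)) (z d e : ℝ × ℝ) :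
    fderiv ℝ (fun p : ℝ × ℝ => fderiv ℝ (fun p : ℝ × ℝ => f p.1 p.2) (p.1, p.2) e) z d =
    fderiv ℝ (fun p : ℝ × ℝ => fderiv ℝ (fun p : ℝ × ℝ => f p.1 p.2) (p.1, p.2) d) z e := by
  have h := hf.fderiv_right (m := (⊤ : ℕ∞)) (by simp)
  have hd : DifferentiableAt ℝ (fderiv ℝ (fun p : ℝ × ℝ => f p.1 p.2)) z := h.differentiable (by simp) z
  have hs : IsSymmSndFDerivAt ℝ (fun p : ℝ × ℝ => f p.1 p.2) z :=
    (hf.contDiffAt).isSymmSndFDerivAt (by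
      rw [minSmoothness_of_isRCLikeNormedField]
      exact WithTop.coe_le_coe.2 (le_top : (2 : ℕ∞) ≤ ⊤))
  have key : ∀ d e : ℝ × ℝ, fderiv ℝ (fun p : ℝ × ℝ => fderiv ℝ (fun p : ℝ × ℝ => f p.1 p.2) (p.1, p.2) e) z d
      = fderiv ℝ (fderiv ℝ (fun p : ℝ × ℝ => f p.1 p.2)) z d e := by
    intro d e
    have := (hd.hasFDerivAt.clm_apply (hasFDerivAt_const e z)).fderiv
    simp only [Prod.mk.eta]
    rw [this]; simp
  rw [key, key, hs d e]

theorem aux_int {F F' : ℝ → ℝ → ℝ} (hF : Continuous (fun p : ℝ × ℝ => F p.1 p.2))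
    (hF' : Continuous (fun p : ℝ × ℝ => F' p.1 p.2))
    (h : ∀ t x, HasDerivAt (fun τ => F τ x) (F' t x) t) (a b t : ℝ) :
    HasDerivAt (fun τ => ∫ x in a..b, F τ x) (∫ x in a..b, F' t x) t := by
  obtain ⟨M, hM⟩ := ((isCompact_Icc (a := t - 1) (b := t + 1)).prod
    (isCompact_uIcc (a := a) (b := b))).exists_bound_of_continuousOn hF'.continuousOn
  have c1 : ∀ s, Continuous (F s) := fun s => hF.comp (by fun_prop : Continuous fun x : ℝ => (s, x))
  have c2 : ∀ s, Continuous (F' s) := fun s => hF'.comp (by fun_prop : Continuous fun x : ℝ => (s, x))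
  refine (intervalIntegral.hasDerivAt_integral_of_dominated_loc_of_deriv_le (bound := fun _ => M)
    (Icc_mem_nhds (by linarith : t - 1 < t) (by linarith : t < t + 1)) ?_ ?_ ?_ ?_ ?_ ?_).2
  · exact Filter.Eventually.of_forall fun s => (c1 s).aestronglyMeasurable
  · exact (c1 t).intervalIntegrable _ _
  · exact (c2 t).aestronglyMeasurable
  · refine Filter.Eventually.of_forall fun x hx s hs => hM (s, x) ⟨hs, Set.uIoc_subset_uIcc hx⟩
  · exact intervalIntegrable_const
  · exact Filter.Eventually.of_forall fun x _ s _ => h s x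

theorem aux_per {f f' : ℝ → ℝ} {c : ℝ} (h : ∀ x, HasDerivAt f (f' x) x) (hp : ∀ x, f (x + c) = f x)
    (x : ℝ) : f' (x + c) = f' x := by
  have h1 : HasDerivAt (fun y => f (y + c)) (f' (x + c)) x := (h (x + c)).comp_add_const x c
  have h2 : (fun y => f (y + c)) = f := funext hp
  rw [h2] at h1
  exact h1.unique (h x)

theorem aux_zero {g g' : ℝ → ℝ} {c : ℝ} (h : ∀ x, HasDerivAt g (g' x) x) (hc : Continuous g')
    (hp : ∀ x, g (x + c) = g x) : ∫ x in (0:ℝ)..c, g' x = 0 := by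
  rw [intervalIntegral.integral_eq_sub_of_hasDerivAt (fun x _ => h x) (hc.intervalIntegrable _ _)]
  have := hp 0
  rw [zero_add] at this
  linarith

open Real in
theorem aux_sup {u v : ℝ → ℝ} (hu : ∀ x, HasDerivAt u (v x) x) (hv : Continuous v)
    (x : ℝ) (hx : x ∈ Set.Icc (0:ℝ) (2 * π)) :
    u x ^ 2 ≤ 2 * (∫ x in (0:ℝ)..(2*π), u x ^ 2) + ∫ x in (0:ℝ)..(2*π), v x ^ 2 := by
  have hpi : (0:ℝ) ≤ 2 * π := by positivity
  have cu : Continuous u := continuous_iff_continuousAt.2 fun x => (hu x).continuousAt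
  set A := ∫ x in (0:ℝ)..(2*π), u x ^ 2 with hA
  set B := ∫ x in (0:ℝ)..(2*π), v x ^ 2 with hB
  have hA0 : 0 ≤ A := intervalIntegral.integral_nonneg hpi fun x _ => sq_nonneg _
  have h1 : ∀ y ∈ Set.Icc (0:ℝ) (2*π), u x ^ 2 - (A + B) ≤ u y ^ 2 := by
    intro y hy
    have e : ∫ s in y..x, 2 * u s * v s = u x ^ 2 - u y ^ 2 := by
      apply intervalIntegral.integral_eq_sub_of_hasDerivAt
      · intro s _
        exact ((hu s).fun_pow 2).congr_deriv (by norm_num)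
      · exact (by fun_prop : Continuous fun s => 2 * u s * v s).intervalIntegrable _ _
    have e2 : |∫ s in y..x, 2 * u s * v s| ≤ |∫ s in y..x, (u s ^ 2 + v s ^ 2)| := by
      have := intervalIntegral.norm_integral_le_abs_of_norm_le (μ := MeasureTheory.volume) (a := y) (b := x)
        (f := fun s => 2 * u s * v s) (g := fun s => u s ^ 2 + v s ^ 2)
        (Filter.Eventually.of_forall fun s => by
          simp only [Real.norm_eq_abs]
          rw [abs_le]; constructor <;> nlinarith [sq_nonneg (u s + v s), sq_nonneg (u s - v s)])
        ((by fun_prop : Continuous fun s => u s ^ 2 + v s ^ 2).intervalIntegrable _ _)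
      simpa using this
    have e3 : |∫ s in y..x, (u s ^ 2 + v s ^ 2)| ≤ |∫ s in (0:ℝ)..(2*π), (u s ^ 2 + v s ^ 2)| := by
      apply intervalIntegral.abs_integral_mono_interval
      · rw [Set.uIoc_of_le hpi, Set.uIoc]
        exact Set.Ioc_subset_Ioc (le_min hy.1 hx.1) (max_le hy.2 hx.2)
      · exact Filter.Eventually.of_forall fun s => by simp only [Pi.zero_apply]; positivity
      · exact (by fun_prop : Continuous fun s => u s ^ 2 + v s ^ 2).intervalIntegrable _ _
    rw [intervalIntegral.integral_add ((by fun_prop : Continuous fun s => u s ^ 2).intervalIntegrable 0 (2*π))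
      ((by fun_prop : Continuous fun s => v s ^ 2).intervalIntegrable 0 (2*π)), ← hA, ← hB, abs_of_nonneg (a := A + B)] at e3
    · have := le_abs_self (∫ s in y..x, 2 * u s * v s)
      linarith
    · have : 0 ≤ B := intervalIntegral.integral_nonneg hpi fun x _ => sq_nonneg _
      linarith
  have h2 := intervalIntegral.integral_mono_on hpi (intervalIntegrable_const (c := u x ^ 2 - (A + B)))
    ((by fun_prop : Continuous fun s => u s ^ 2).intervalIntegrable (μ := MeasureTheory.volume) _ _) h1
  rw [intervalIntegral.integral_const, ← hA, smul_eq_mul] at h2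
  by_contra hcon
  push Not at hcon
  nlinarith [Real.pi_gt_three]

open Real in
theorem aux_lin {u v : ℝ → ℝ} (hu : ∀ x, HasDerivAt u (v x) x) (hv : Continuous v) {R : ℝ} (hR : 0 < R)
    (x : ℝ) (hx : x ∈ Set.Icc (0:ℝ) (2 * π)) :
    |u x| ≤ (2 * (∫ x in (0:ℝ)..(2*π), u x ^ 2) + ∫ x in (0:ℝ)..(2*π), v x ^ 2) / (4 * R^2) + R^2 := by
  have h := aux_sup hu hv x hx
  set S := 2 * (∫ x in (0:ℝ)..(2*π), u x ^ 2) + ∫ x in (0:ℝ)..(2*π), v x ^ 2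
  have h2 : |u x| ≤ |u x|^2 / (4*R^2) + R^2 := by
    have : |u x|^2 / (4*R^2) + R^2 - |u x| = (|u x| / (2 * R) - R)^2 := by field_simp; ring
    nlinarith [sq_nonneg (|u x| / (2 * R) - R)]
  rw [sq_abs] at h2
  have : u x ^ 2 / (4*R^2) ≤ S / (4*R^2) := by gcongr
  linarith

open Real in
theorem aux_cub {u v : ℝ → ℝ} (hu : ∀ x, HasDerivAt u (v x) x) (hv : Continuous v) {R : ℝ} (hR : 0 < R)
    (hA : ∫ x in (0:ℝ)..(2*π), u x ^ 2 ≤ R^2) :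
    |∫ x in (0:ℝ)..(2*π), (2/3) * u x ^ 3| ≤
      (1/6) * (2 * R^2 + ∫ x in (0:ℝ)..(2*π), v x ^ 2) + (2/3) * R^4 := by
  have hpi : (0:ℝ) ≤ 2 * π := by positivity
  have cu : Continuous u := continuous_iff_continuousAt.2 fun x => (hu x).continuousAt
  have h := aux_lin hu hv hR
  set A := ∫ x in (0:ℝ)..(2*π), u x ^ 2 with hAd
  set B := ∫ x in (0:ℝ)..(2*π), v x ^ 2 with hB
  have hA0 : 0 ≤ A := intervalIntegral.integral_nonneg hpi fun x _ => sq_nonneg _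
  have hB0 : 0 ≤ B := intervalIntegral.integral_nonneg hpi fun x _ => sq_nonneg _
  set m := (2 * A + B) / (4 * R^2) + R^2 with hm
  have h1 : |∫ x in (0:ℝ)..(2*π), (2/3) * u x ^ 3| ≤ ∫ x in (0:ℝ)..(2*π), (2/3 * m) * u x ^ 2 := by
    refine (intervalIntegral.abs_integral_le_integral_abs hpi).trans ?_
    apply intervalIntegral.integral_mono_on hpi
    · exact (by fun_prop : Continuous fun x => |2/3 * u x ^ 3|).intervalIntegrable _ _
    · exact (by fun_prop : Continuous fun x => (2/3 * m) * u x ^ 2).intervalIntegrable _ _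
    · intro x hx
      have := h x hx
      rw [abs_mul, abs_pow, abs_of_pos (by norm_num : (0:ℝ) < 2/3), ← sq_abs (u x)]
      nlinarith [sq_nonneg (|u x|)]
  rw [intervalIntegral.integral_const_mul (2/3 * m), ← hAd] at h1
  have hm0 : 0 ≤ m := by positivity
  have h2 : m * A ≤ m * R^2 := by gcongr
  have h3 : m * R^2 = (2 * A + B) / 4 + R^4 := by rw [hm]; field_simp
  linarith

open Real in
theorem aux_quad {u v w : ℝ → ℝ} (hu : ∀ x, HasDerivAt u (v x) x) (hv : ∀ x, HasDerivAt v (w x) x)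
    (hw : Continuous w) (hp : ∀ x, u (x + 2 * π) = u x) {R : ℝ} (hR : 0 < R)
    (hA : ∫ x in (0:ℝ)..(2*π), u x ^ 2 ≤ R^2) :
    -(∫ x in (0:ℝ)..(2*π), 4 * u x * v x ^ 2) ≤
      (∫ x in (0:ℝ)..(2*π), w x ^ 2) + (2 + 4 * R^2) * ∫ x in (0:ℝ)..(2*π), v x ^ 2 := by
  have hpi : (0:ℝ) ≤ 2 * π := by positivity
  have cu : Continuous u := continuous_iff_continuousAt.2 fun x => (hu x).continuousAt
  have cv : Continuous v := continuous_iff_continuousAt.2 fun x => (hv x).continuousAt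
  have h := aux_lin hu cv hR
  have hpv := aux_per hu hp
  have hibp : ∫ x in (0:ℝ)..(2*π), (v x ^ 2 + u x * w x) = 0 := by
    apply aux_zero (g := fun x => u x * v x)
    · intro x
      exact ((hu x).fun_mul (hv x)).congr_deriv (by ring)
    · fun_prop
    · intro x; rw [hp, hpv]
  have i1 : IntervalIntegrable (fun x => u x ^ 2) MeasureTheory.volume 0 (2*π) :=
    (cu.pow 2).intervalIntegrable _ _
  have i2 : IntervalIntegrable (fun x => v x ^ 2) MeasureTheory.volume 0 (2*π) :=
    (cv.pow 2).intervalIntegrable _ _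
  have i3 : IntervalIntegrable (fun x => w x ^ 2) MeasureTheory.volume 0 (2*π) :=
    (hw.pow 2).intervalIntegrable _ _
  have i4 : IntervalIntegrable (fun x => u x * w x) MeasureTheory.volume 0 (2*π) :=
    (cu.mul hw).intervalIntegrable _ _
  rw [intervalIntegral.integral_add i2 i4] at hibp
  set A := ∫ x in (0:ℝ)..(2*π), u x ^ 2 with hAd
  set B := ∫ x in (0:ℝ)..(2*π), v x ^ 2 with hB
  set D := ∫ x in (0:ℝ)..(2*π), w x ^ 2 with hD
  have hA0 : 0 ≤ A := intervalIntegral.integral_nonneg hpi fun x _ => sq_nonneg _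
  have hB0 : 0 ≤ B := intervalIntegral.integral_nonneg hpi fun x _ => sq_nonneg _
  set m := (2 * A + B) / (4 * R^2) + R^2 with hm
  have h1 : -(∫ x in (0:ℝ)..(2*π), 4 * u x * v x ^ 2) ≤ ∫ x in (0:ℝ)..(2*π), (4 * m) * v x ^ 2 := by
    rw [← intervalIntegral.integral_neg]
    apply intervalIntegral.integral_mono_on hpi
    · exact (by fun_prop : Continuous fun x => -(4 * u x * v x ^ 2)).intervalIntegrable _ _
    · exact (by fun_prop : Continuous fun x => (4 * m) * v x ^ 2).intervalIntegrable _ _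
    · intro x hx
      have := h x hx
      have := neg_abs_le (u x)
      nlinarith [sq_nonneg (v x)]
  rw [intervalIntegral.integral_const_mul, ← hB] at h1
  have hq : ∀ l : ℝ, 0 ≤ D - 2 * l * B + l^2 * A := by
    intro l
    have e : ∫ x in (0:ℝ)..(2*π), (w x + l * u x)^2 = D + (2 * l) * (∫ x in (0:ℝ)..(2*π), u x * w x) + l^2 * A := by
      rw [hD, hAd, ← intervalIntegral.integral_const_mul, ← intervalIntegral.integral_const_mul,
        ← intervalIntegral.integral_add i3 (i4.const_mul _),
        ← intervalIntegral.integral_add (i3.add (i4.const_mul _)) (i1.const_mul _)]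
      congr 1; ext x; ring
    have e0 : 0 ≤ ∫ x in (0:ℝ)..(2*π), (w x + l * u x)^2 :=
      intervalIntegral.integral_nonneg hpi fun x _ => sq_nonneg _
    have : (∫ x in (0:ℝ)..(2*π), u x * w x) = -B := by linarith
    rw [e, this] at e0
    linarith
  have hq1 := hq (B / R^2)
  have hq2 : (B / R^2)^2 * A ≤ (B/R^2)^2 * R^2 := by gcongr
  have hq3 : (B/R^2)^2 * R^2 = B^2 / R^2 := by field_simp
  have hq4 : 2 * (B / R^2) * B = 2 * (B^2 / R^2) := by ring
  have hBD : B^2 / R^2 ≤ D := by linarith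
  have hAR : A / R^2 ≤ 1 := by rw [div_le_one (by positivity)]; exact hA
  have hm1 : 4 * m * B = 2 * (A / R^2) * B + B^2/R^2 + 4 * R^2 * B := by rw [hm]; field_simp
  have : A / R^2 * B ≤ 1 * B := by gcongr
  linarith

open Real in
theorem aux_mass {u v w z p : ℝ → ℝ} {ε : ℝ} (hu : ∀ x, HasDerivAt u (v x) x)
    (hv : ∀ x, HasDerivAt v (w x) x) (hw : ∀ x, HasDerivAt w (z x) x)
    (cz : Continuous z) (cp : Continuous p)
    (hper : ∀ x, u (x + 2 * π) = u x)
    (heq : ∀ x, p x + z x - ε * w x = 2 * u x * v x) :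
    ∫ x in (0:ℝ)..(2*π), 2 * u x * p x = -(2 * ε) * ∫ x in (0:ℝ)..(2*π), v x ^ 2 := by
  have cu : Continuous u := continuous_iff_continuousAt.2 fun x => (hu x).continuousAt
  have cv : Continuous v := continuous_iff_continuousAt.2 fun x => (hv x).continuousAt
  have cw : Continuous w := continuous_iff_continuousAt.2 fun x => (hw x).continuousAt
  have hpv := aux_per hu hper
  have hpw := aux_per hv hpv
  have h0 : ∫ x in (0:ℝ)..(2*π), (2 * u x * p x + 2 * ε * v x ^ 2) = 0 := by
    apply aux_zero (g := fun x => (-2) * (u x * w x) + v x ^ 2 + 2 * ε * (u x * v x) + 4/3 * u x ^ 3)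
    · intro x
      refine ((((((hu x).fun_mul (hw x)).const_mul (-2)).fun_add ((hv x).fun_pow 2)).fun_add
        (((hu x).fun_mul (hv x)).const_mul (2 * ε))).fun_add
        (((hu x).fun_pow 3).const_mul (4/3))).congr_deriv ?_
      have : p x = 2 * u x * v x - z x + ε * w x := by linarith [heq x]
      rw [this]; norm_num; ring
    · fun_prop
    · intro x; simp only [hper, hpv, hpw]
  rw [intervalIntegral.integral_add
    ((by fun_prop : Continuous fun x => 2 * u x * p x).intervalIntegrable _ _)
    ((by fun_prop : Continuous fun x => 2 * ε * v x ^ 2).intervalIntegrable _ _),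
    intervalIntegral.integral_const_mul (2 * ε)] at h0
  linarith

open Real in
theorem aux_energy {u v w z p q : ℝ → ℝ} {ε K : ℝ} (hu : ∀ x, HasDerivAt u (v x) x)
    (hv : ∀ x, HasDerivAt v (w x) x) (hw : ∀ x, HasDerivAt w (z x) x)
    (hp : ∀ x, HasDerivAt p (q x) x)
    (cz : Continuous z) (cq : Continuous q)
    (hper : ∀ x, u (x + 2 * π) = u x)
    (hpp : ∀ x, p (x + 2 * π) = p x)
    (heq : ∀ x, p x + z x - ε * w x = 2 * u x * v x) :
    ∫ x in (0:ℝ)..(2*π), (2 * v x * q x + 2 * u x ^ 2 * p x + K * (2 * u x * p x)) =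
      -(2 * ε) * (∫ x in (0:ℝ)..(2*π), w x ^ 2) - ε * (∫ x in (0:ℝ)..(2*π), 4 * u x * v x ^ 2)
        - (2 * K * ε) * ∫ x in (0:ℝ)..(2*π), v x ^ 2 := by
  have cu : Continuous u := continuous_iff_continuousAt.2 fun x => (hu x).continuousAt
  have cv : Continuous v := continuous_iff_continuousAt.2 fun x => (hv x).continuousAt
  have cw : Continuous w := continuous_iff_continuousAt.2 fun x => (hw x).continuousAt
  have cp : Continuous p := continuous_iff_continuousAt.2 fun x => (hp x).continuousAt
  have hpv := aux_per hu hper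
  have hpw := aux_per hv hpv
  have h0 : ∫ x in (0:ℝ)..(2*π), (2 * v x * q x + 2 * u x ^ 2 * p x +
      (2 * ε * w x ^ 2 + ε * (4 * u x * v x ^ 2))) = 0 := by
    apply aux_zero (g := fun x => 2 * (v x * p x) + w x ^ 2 + (-2) * (u x ^ 2 * w x) + u x ^ 4
      + 2 * ε * (u x ^ 2 * v x))
    · intro x
      refine ((((((((hv x).fun_mul (hp x)).const_mul 2).fun_add ((hw x).fun_pow 2)).fun_add
        ((((hu x).fun_pow 2).fun_mul (hw x)).const_mul (-2))).fun_add ((hu x).fun_pow 4))).fun_add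
        ((((hu x).fun_pow 2).fun_mul (hv x)).const_mul (2 * ε))).congr_deriv ?_
      have : p x = 2 * u x * v x - z x + ε * w x := by linarith [heq x]
      rw [this]; norm_num; ring
    · fun_prop
    · intro x; simp only [hper, hpv, hpw, hpp]
  have hm := aux_mass hu hv hw cz cp hper heq
  have i1 : IntervalIntegrable (fun x => 2 * v x * q x + 2 * u x ^ 2 * p x) MeasureTheory.volume 0 (2*π) :=
    (by fun_prop : Continuous fun x => 2 * v x * q x + 2 * u x ^ 2 * p x).intervalIntegrable _ _
  have i2 : IntervalIntegrable (fun x => 2 * ε * w x ^ 2) MeasureTheory.volume 0 (2*π) :=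
    (by fun_prop : Continuous fun x => 2 * ε * w x ^ 2).intervalIntegrable _ _
  have i3 : IntervalIntegrable (fun x => ε * (4 * u x * v x ^ 2)) MeasureTheory.volume 0 (2*π) :=
    (by fun_prop : Continuous fun x => ε * (4 * u x * v x ^ 2)).intervalIntegrable _ _
  have i4 : IntervalIntegrable (fun x => K * (2 * u x * p x)) MeasureTheory.volume 0 (2*π) :=
    (by fun_prop : Continuous fun x => K * (2 * u x * p x)).intervalIntegrable _ _
  rw [intervalIntegral.integral_add i1 (i2.add i3), intervalIntegral.integral_add i2 i3,
    intervalIntegral.integral_const_mul (2 * ε), intervalIntegral.integral_const_mul ε] at h0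
  rw [intervalIntegral.integral_add i1 i4, intervalIntegral.integral_const_mul K, hm]
  linarith

theorem aux_anti {f f' : ℝ → ℝ} {T : ℝ} (h : ∀ t, HasDerivAt f (f' t) t)
    (hn : ∀ t ∈ Set.Icc 0 T, f' t ≤ 0) : AntitoneOn f (Set.Icc 0 T) := by
  apply antitoneOn_of_deriv_nonpos (convex_Icc 0 T)
  · exact fun t _ => (h t).continuousAt.continuousWithinAt
  · exact fun t _ => (h t).differentiableAt.differentiableWithinAt
  · intro t ht
    rw [(h t).deriv]
    exact hn t (interior_subset ht)

open Real in
theorem stmt17 (T R : ℝ) (hT : 0 < T) (hR : 0 < R) :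
    ∃ C : ℝ, 0 < C ∧
      ∀ ε : ℝ, ε ∈ Set.Ioc (0 : ℝ) 1 →
        ∀ u : ℝ → ℝ → ℝ,
          ContDiff ℝ (⊤ : ℕ∞) (fun p : ℝ × ℝ => u p.1 p.2) →
          (∀ t x : ℝ, u t (x + 2 * π) = u t x) →
          (∀ t ∈ Set.Icc (0 : ℝ) T, ∀ x : ℝ,
            deriv (fun τ => u τ x) t + iteratedDeriv 3 (u t) x -
                ε * iteratedDeriv 2 (u t) x =
              deriv (fun y => (u t y) ^ 2) x) →
          (∫ x in (0 : ℝ)..(2 * π), ((u 0 x) ^ 2 + (deriv (u 0) x) ^ 2)) ≤ R ^ 2 →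
          ∀ t ∈ Set.Icc (0 : ℝ) T,
            Real.sqrt (∫ x in (0 : ℝ)..(2 * π), ((u t x) ^ 2 + (deriv (u t) x) ^ 2)) +
                Real.sqrt ε *
                  Real.sqrt (∫ τ in (0 : ℝ)..T, ∫ x in (0 : ℝ)..(2 * π),
                    (iteratedDeriv 2 (u τ) x) ^ 2) ≤ C := by
  set K : ℝ := 1 + 2 * R^2 with hK
  set N : ℝ := R^2 + 1/6 * (2 * R^2 + R^2) + 2/3 * R^4 + K * R^2 + R^2/3 + 2/3 * R^4 with hN
  have hK0 : 0 < K := by positivity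
  have hN0 : 0 < N := by positivity
  refine ⟨√(R^2 + 2 * N) + √N, by positivity, ?_⟩
  rintro ε ⟨hε, -⟩ u su hper heq hinit t ht
  have hpi : (0:ℝ) ≤ 2 * π := by positivity
  obtain ⟨v, hv⟩ : ∃ v : ℝ → ℝ → ℝ, v = fun t x => fderiv ℝ (fun p : ℝ × ℝ => u p.1 p.2) (t, x) (0, 1) := ⟨_, rfl⟩
  obtain ⟨p, hp⟩ : ∃ p : ℝ → ℝ → ℝ, p = fun t x => fderiv ℝ (fun p : ℝ × ℝ => u p.1 p.2) (t, x) (1, 0) := ⟨_, rfl⟩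
  have sv : ContDiff ℝ (⊤ : ℕ∞) (fun p : ℝ × ℝ => v p.1 p.2) := by rw [hv]; exact aux_sm su _
  have sp : ContDiff ℝ (⊤ : ℕ∞) (fun q : ℝ × ℝ => p q.1 q.2) := by rw [hp]; exact aux_sm su _
  obtain ⟨w, hw⟩ : ∃ w : ℝ → ℝ → ℝ, w = fun t x => fderiv ℝ (fun p : ℝ × ℝ => v p.1 p.2) (t, x) (0, 1) := ⟨_, rfl⟩
  have sw : ContDiff ℝ (⊤ : ℕ∞) (fun p : ℝ × ℝ => w p.1 p.2) := by rw [hw]; exact aux_sm sv _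
  obtain ⟨z, hz⟩ : ∃ z : ℝ → ℝ → ℝ, z = fun t x => fderiv ℝ (fun p : ℝ × ℝ => w p.1 p.2) (t, x) (0, 1) := ⟨_, rfl⟩
  have sz : ContDiff ℝ (⊤ : ℕ∞) (fun p : ℝ × ℝ => z p.1 p.2) := by rw [hz]; exact aux_sm sw _
  obtain ⟨q, hq⟩ : ∃ q : ℝ → ℝ → ℝ, q = fun t x => fderiv ℝ (fun q : ℝ × ℝ => p q.1 q.2) (t, x) (0, 1) := ⟨_, rfl⟩
  have sq : ContDiff ℝ (⊤ : ℕ∞) (fun p : ℝ × ℝ => q p.1 p.2) := by rw [hq]; exact aux_sm sp _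
  have dux : ∀ t x, HasDerivAt (u t) (v t x) x := by rw [hv]; exact aux_dx su
  have dut : ∀ t x, HasDerivAt (fun τ => u τ x) (p t x) t := by rw [hp]; exact aux_dt su
  have dvx : ∀ t x, HasDerivAt (v t) (w t x) x := by rw [hw]; exact aux_dx sv
  have dwx : ∀ t x, HasDerivAt (w t) (z t x) x := by rw [hz]; exact aux_dx sw
  have dpx : ∀ t x, HasDerivAt (p t) (q t x) x := by rw [hq]; exact aux_dx sp
  have dvt : ∀ t x, HasDerivAt (fun τ => v τ x) (q t x) t := by
    intro t x
    have h := aux_dt sv t x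
    have e : q t x = fderiv ℝ (fun p : ℝ × ℝ => v p.1 p.2) (t, x) (1, 0) := by
      rw [hq, hp, hv]; exact aux_comm su (t, x) (0, 1) (1, 0)
    rw [e]; exact h
  have cu := su.continuous
  have cv := sv.continuous
  have cw := sw.continuous
  have cz := sz.continuous
  have cp := sp.continuous
  have cq := sq.continuous
  clear hv hp hw hz hq
  have sec : ∀ {f : ℝ → ℝ → ℝ}, Continuous (fun p : ℝ × ℝ => f p.1 p.2) → ∀ s, Continuous (f s) :=
    fun h s => h.comp (by fun_prop : Continuous fun x : ℝ => (s, x))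
  have d1 : ∀ t, deriv (u t) = v t := fun t => funext fun x => (dux t x).deriv
  have d1v : ∀ t, deriv (v t) = w t := fun t => funext fun x => (dvx t x).deriv
  have d1w : ∀ t, deriv (w t) = z t := fun t => funext fun x => (dwx t x).deriv
  have d2 : ∀ t, iteratedDeriv 2 (u t) = w t := fun t => by
    rw [iteratedDeriv_succ, iteratedDeriv_one, d1, d1v]
  have d3 : ∀ t, iteratedDeriv 3 (u t) = z t := fun t => by
    rw [iteratedDeriv_succ, d2, d1w]
  have heq' : ∀ t ∈ Set.Icc (0:ℝ) T, ∀ x, p t x + z t x - ε * w t x = 2 * u t x * v t x := by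
    intro t ht x
    have := heq t ht x
    rw [d2, d3, (dut t x).deriv, ((dux t x).fun_pow 2).deriv] at this
    rw [this]; norm_num
  have hpp : ∀ t x, p t (x + 2 * π) = p t x := by
    intro t x
    have h1 := dut t (x + 2 * π)
    have h2 : (fun τ => u τ (x + 2 * π)) = fun τ => u τ x := funext fun τ => hper τ x
    rw [h2] at h1
    exact h1.unique (dut t x)
  simp only [d1, d2] at hinit ⊢
  clear heq
  -- abbreviations
  obtain ⟨A, hA⟩ : ∃ A : ℝ → ℝ, A = fun t => ∫ x in (0:ℝ)..(2*π), u t x ^ 2 := ⟨_, rfl⟩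
  obtain ⟨B, hB⟩ : ∃ B : ℝ → ℝ, B = fun t => ∫ x in (0:ℝ)..(2*π), v t x ^ 2 := ⟨_, rfl⟩
  obtain ⟨D, hD⟩ : ∃ D : ℝ → ℝ, D = fun t => ∫ x in (0:ℝ)..(2*π), w t x ^ 2 := ⟨_, rfl⟩
  obtain ⟨Q, hQ⟩ : ∃ Q : ℝ → ℝ, Q = fun t => ∫ x in (0:ℝ)..(2*π), (2/3) * u t x ^ 3 := ⟨_, rfl⟩
  have iu : ∀ t, IntervalIntegrable (fun x => u t x ^ 2) MeasureTheory.volume 0 (2*π) :=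
    fun t => ((sec cu t).pow 2).intervalIntegrable _ _
  have iv : ∀ t, IntervalIntegrable (fun x => v t x ^ 2) MeasureTheory.volume 0 (2*π) :=
    fun t => ((sec cv t).pow 2).intervalIntegrable _ _
  have i3 : ∀ t, IntervalIntegrable (fun x => (2/3) * u t x ^ 3) MeasureTheory.volume 0 (2*π) :=
    fun t => (((sec cu t).pow 3).const_mul _).intervalIntegrable _ _
  have hA0 : ∀ t, 0 ≤ A t := fun t => by
    rw [hA]; exact intervalIntegral.integral_nonneg hpi fun x _ => sq_nonneg _
  have hB0 : ∀ t, 0 ≤ B t := fun t => by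
    rw [hB]; exact intervalIntegral.integral_nonneg hpi fun x _ => sq_nonneg _
  have hD0 : ∀ t, 0 ≤ D t := fun t => by
    rw [hD]; exact intervalIntegral.integral_nonneg hpi fun x _ => sq_nonneg _
  have hAB : ∀ t, ∫ x in (0:ℝ)..(2*π), (u t x ^ 2 + v t x ^ 2) = A t + B t := fun t => by
    rw [hA, hB]; exact intervalIntegral.integral_add (iu t) (iv t)
  rw [hAB] at hinit ⊢
  have t0 : (0:ℝ) ∈ Set.Icc 0 T := ⟨le_rfl, hT.le⟩
  have tT : T ∈ Set.Icc 0 T := ⟨hT.le, le_rfl⟩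
  -- mass
  have dA : ∀ t, HasDerivAt A (∫ x in (0:ℝ)..(2*π), 2 * u t x * p t x) t := by
    intro t
    rw [hA]
    refine aux_int (F' := fun t x => 2 * u t x * p t x) (by fun_prop) (by fun_prop) ?_ _ _ t
    intro t x
    exact ((dut t x).fun_pow 2).congr_deriv (by norm_num)
  have antiA : AntitoneOn A (Set.Icc 0 T) := by
    refine aux_anti dA ?_
    intro t ht
    rw [aux_mass (dux t) (dvx t) (dwx t) (sec cz t) (sec cp t) (hper t) (heq' t ht)]
    have := hB0 t
    rw [hB] at this
    simp only at this
    nlinarith [mul_nonneg hε.le this]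
  have hAR : ∀ t ∈ Set.Icc 0 T, A t ≤ R^2 := fun t ht => by
    have := antiA t0 ht ht.1
    linarith [hB0 0]
  -- energy
  have hE : ∀ t, ∫ x in (0:ℝ)..(2*π), (v t x ^ 2 + 2/3 * u t x ^ 3 + K * u t x ^ 2) = B t + Q t + K * A t := fun t => by
    rw [intervalIntegral.integral_add ((iv t).add (i3 t)) ((iu t).const_mul K),
      intervalIntegral.integral_add (iv t) (i3 t), intervalIntegral.integral_const_mul K, hA, hB, hQ]
  have dE : ∀ t, HasDerivAt (fun t => B t + Q t + K * A t)
      (∫ x in (0:ℝ)..(2*π), (2 * v t x * q t x + 2 * u t x ^ 2 * p t x + K * (2 * u t x * p t x))) t := by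
    intro t
    rw [← funext hE]
    refine aux_int (F := fun t x => v t x ^ 2 + 2/3 * u t x ^ 3 + K * u t x ^ 2)
      (F' := fun t x => 2 * v t x * q t x + 2 * u t x ^ 2 * p t x + K * (2 * u t x * p t x))
      (by fun_prop) (by fun_prop) ?_ _ _ t
    intro t x
    exact ((((dvt t x).fun_pow 2).fun_add (((dut t x).fun_pow 3).const_mul (2/3))).fun_add
      (((dut t x).fun_pow 2).const_mul K)).congr_deriv (by norm_num; ring)
  have cD : Continuous D := by
    rw [hD]
    exact intervalIntegral.continuous_parametric_intervalIntegral_of_continuous'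
      (f := fun t x => w t x ^ 2) (by rw [Function.uncurry_def]; exact cw.pow 2) _ _
  have dI : ∀ t, HasDerivAt (fun t => ∫ τ in (0:ℝ)..t, D τ) (D t) t := fun t =>
    intervalIntegral.integral_hasDerivAt_right (cD.intervalIntegrable _ _)
      (cD.stronglyMeasurableAtFilter _ _) cD.continuousAt
  have antiF := aux_anti (T := T) (fun t => (dE t).fun_add ((dI t).const_mul ε)) (by
    intro t ht
    rw [aux_energy (dux t) (dvx t) (dwx t) (dpx t) (sec cz t) (sec cq t) (hper t) (hpp t) (heq' t ht)]
    have h := aux_quad (dux t) (dvx t) (sec cw t) (hper t) hR (by have := hAR t ht; rwa [hA] at this)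
    have h' := mul_le_mul_of_nonneg_left h hε.le
    rw [hD, hK]
    linarith)
  have hQb : ∀ t ∈ Set.Icc 0 T, |Q t| ≤ (1/6) * (2 * R^2 + B t) + (2/3) * R^4 := by
    intro t ht
    rw [hQ, hB]
    exact aux_cub (dux t) (sec cv t) hR (by have := hAR t ht; rwa [hA] at this)
  have hI0 : ∀ t ∈ Set.Icc 0 T, 0 ≤ ∫ τ in (0:ℝ)..t, D τ := fun t ht =>
    intervalIntegral.integral_nonneg ht.1 fun x _ => hD0 x
  have main : ∀ t ∈ Set.Icc 0 T, 5/6 * B t + ε * (∫ τ in (0:ℝ)..t, D τ) ≤ N := by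
    intro t ht
    have h := antiF t0 ht ht.1
    simp only [intervalIntegral.integral_same, mul_zero, add_zero] at h
    have a := abs_le.1 (hQb t ht)
    have b := abs_le.1 (hQb 0 t0)
    have c : K * A 0 ≤ K * R^2 := by gcongr; exact hAR 0 t0
    have d : 0 ≤ K * A t := mul_nonneg hK0.le (hA0 t)
    have e : B 0 ≤ R^2 := by linarith [hA0 0]
    rw [hN]
    linarith [a.1, b.2]
  have hDe : ∫ τ in (0:ℝ)..T, ∫ x in (0:ℝ)..(2*π), w τ x ^ 2 = ∫ τ in (0:ℝ)..T, D τ := by rw [hD]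
  rw [hDe, ← Real.sqrt_mul hε.le]
  have m1 := main t ht
  have m2 := main T tT
  have n1 := mul_nonneg hε.le (hI0 t ht)
  exact add_le_add (Real.sqrt_le_sqrt (by linarith [hAR t ht])) (Real.sqrt_le_sqrt (by linarith [hB0 T]))
end

section
/- For every T > 0 and every R > 0 there exists a constant C > 0 such that the following holds: for every ε ∈ (0,1] and every C^∞ function u : ℝ × ℝ → ℝ which is 2π-periodic in its second variable, satisfies the modified KdV–Burgers equation ∂_t u + ∂_x³ u − ε ∂_x² u = ∂_x(u³) at every point of [0,T] × ℝ, and whose initial data satisfies ∫₀^{2π} (u(0,x)² + (∂_x u(0,x))² + (∂_x² u(0,x))²) dx ≤ R², one has sup_{t ∈ [0,T]} (∫₀^{2π} (u(t,x)² + (∂_x u(t,x))² + (∂_x² u(t,x))²) dx)^{1/2} + ε^{1/2}·(∫₀ᵀ ∫₀^{2π} (u(τ,x)² + (∂_x u(τ,x))² + (∂_x² u(τ,x))² + (∂_x³ u(τ,x))²) dx dτ)^{1/2} ≤ C. -/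
open Real

noncomputable def dX (g : ℝ × ℝ → ℝ) : ℝ × ℝ → ℝ := fun p => fderiv ℝ g p (0, 1)
noncomputable def dT (g : ℝ × ℝ → ℝ) : ℝ × ℝ → ℝ := fun p => fderiv ℝ g p (1, 0)

abbrev Sm (g : ℝ × ℝ → ℝ) : Prop := ContDiff ℝ (⊤ : ℕ∞) g

lemma Sm.dX {g : ℝ × ℝ → ℝ} (h : Sm g) : Sm (dX g) :=
  (h.fderiv_right (m := (⊤ : ℕ∞)) (by simp)).clm_apply contDiff_const

lemma Sm.dT {g : ℝ × ℝ → ℝ} (h : Sm g) : Sm (dT g) :=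
  (h.fderiv_right (m := (⊤ : ℕ∞)) (by simp)).clm_apply contDiff_const

lemma Sm.hX {g : ℝ × ℝ → ℝ} (h : Sm g) (t x : ℝ) :
    HasDerivAt (fun y => g (t, y)) (_root_.dX g (t, x)) x := by
  have h1 : HasFDerivAt g (fderiv ℝ g (t, x)) (t, x) :=
    (h.differentiable (by simp) (t, x)).hasFDerivAt
  exact h1.comp_hasDerivAt x ((hasDerivAt_const x t).prodMk (hasDerivAt_id x))

lemma Sm.hT {g : ℝ × ℝ → ℝ} (h : Sm g) (t x : ℝ) :
    HasDerivAt (fun s => g (s, x)) (_root_.dT g (t, x)) t := by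
  have h1 : HasFDerivAt g (fderiv ℝ g (t, x)) (t, x) :=
    (h.differentiable (by simp) (t, x)).hasFDerivAt
  exact h1.comp_hasDerivAt t ((hasDerivAt_id t).prodMk (hasDerivAt_const t x))

lemma Sm.comm {g : ℝ × ℝ → ℝ} (h : Sm g) : _root_.dT (_root_.dX g) = _root_.dX (_root_.dT g) := by
  funext p
  have hd : DifferentiableAt ℝ (fderiv ℝ g) p :=
    (h.fderiv_right (m := (⊤ : ℕ∞)) (by simp)).differentiable (by simp) p
  have hs : IsSymmSndFDerivAt ℝ g p := (h.contDiffAt).isSymmSndFDerivAt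
    (by simp; exact WithTop.coe_le_coe.2 (le_top : (2 : ℕ∞) ≤ ⊤))
  have e1 : ∀ v w : ℝ × ℝ, fderiv ℝ (fun q => fderiv ℝ g q v) p w = fderiv ℝ (fderiv ℝ g) p w v := by
    intro v w
    rw [fderiv_clm_apply hd (differentiableAt_const v)]
    simp
  change fderiv ℝ (fun q => fderiv ℝ g q (0, 1)) p (1, 0) =
    fderiv ℝ (fun q => fderiv ℝ g q (1, 0)) p (0, 1)
  rw [e1, e1]
  exact hs _ _

def Per (g : ℝ × ℝ → ℝ) : Prop := ∀ t x, g (t, x + 2 * π) = g (t, x)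

lemma Per.dX {g : ℝ × ℝ → ℝ} (hg : Per g) : Per (dX g) := by
  intro t x
  have e : (fun q => g (q + (0, 2 * π))) = g := by
    funext ⟨s, y⟩
    simpa using hg s y
  have := fderiv_comp_add_right (𝕜 := ℝ) (f := g) (x := (t, x)) ((0 : ℝ), 2 * π)
  rw [e] at this
  simp only [_root_.dX, this]
  simp

lemma leibniz {P Q : ℝ × ℝ → ℝ} (hP : Continuous P) (hQ : Continuous Q)
    (h : ∀ t x, HasDerivAt (fun s => P (s, x)) (Q (t, x)) t) (t : ℝ) :
    HasDerivAt (fun s => ∫ x in (0 : ℝ)..(2 * π), P (s, x))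
      (∫ x in (0 : ℝ)..(2 * π), Q (t, x)) t := by
  obtain ⟨M, hM⟩ := ((isCompact_Icc (a := t - 1) (b := t + 1)).prod
    (isCompact_uIcc (a := (0 : ℝ)) (b := 2 * π))).exists_bound_of_continuousOn hQ.continuousOn
  refine (intervalIntegral.hasDerivAt_integral_of_dominated_loc_of_deriv_le
    (F := fun s x => P (s, x)) (F' := fun s x => Q (s, x)) (bound := fun _ => M)
    (s := Set.Icc (t - 1) (t + 1)) (Icc_mem_nhds (by linarith) (by linarith)) ?_ ?_ ?_ ?_ ?_ ?_).2
  · exact Filter.Eventually.of_forall fun s =>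
      (hP.comp (by fun_prop : Continuous fun x : ℝ => (s, x))).aestronglyMeasurable
  · exact (hP.comp (by fun_prop : Continuous fun x : ℝ => (t, x))).intervalIntegrable _ _
  · exact (hQ.comp (by fun_prop : Continuous fun x : ℝ => (t, x))).aestronglyMeasurable
  · refine Filter.Eventually.of_forall fun x hx s hs => hM (s, x) ⟨hs, Set.uIoc_subset_uIcc hx⟩
  · simp
  · exact Filter.Eventually.of_forall fun x _ s _ => h s x

lemma cont_int {P : ℝ × ℝ → ℝ} (hP : Continuous P) :
    Continuous (fun s => ∫ x in (0 : ℝ)..(2 * π), P (s, x)) :=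
  intervalIntegral.continuous_parametric_intervalIntegral_of_continuous' (f := fun s x => P (s, x))
    (by simpa [Function.uncurry_def] using hP) _ _

/-- integration of an exact derivative plus remainder -/
lemma int_flux {P D G : ℝ → ℝ} (hP : Continuous P) (hD : Continuous D)
    (hG : ∀ x, HasDerivAt G (P x + D x) x) (hper : G (2 * π) = G 0) :
    ∫ x in (0 : ℝ)..(2 * π), P x = - ∫ x in (0 : ℝ)..(2 * π), D x := by
  have := intervalIntegral.integral_eq_sub_of_hasDerivAt (a := 0) (b := 2 * π) (fun x _ => hG x)
    ((hP.add hD).intervalIntegrable _ _)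
  rw [intervalIntegral.integral_add (hP.intervalIntegrable _ _) (hD.intervalIntegrable _ _)] at this
  linarith

lemma sobolev {g g' : ℝ → ℝ} (hg' : Continuous g') (h : ∀ x, HasDerivAt g (g' x) x)
    (hper : ∀ x, g (x + 2 * π) = g x) (x : ℝ) :
    g x ^ 2 ≤ 2 * ∫ y in (0 : ℝ)..(2 * π), (g y ^ 2 + g' y ^ 2) := by
  have hg : Continuous g := continuous_iff_continuousAt.2 fun x => (h x).continuousAt
  have hp := Real.pi_pos
  have hp3 := Real.pi_gt_three
  set I := ∫ y in (0 : ℝ)..(2 * π), (g y ^ 2 + g' y ^ 2) with hI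
  have cI : Continuous fun y => g y ^ 2 + g' y ^ 2 := by fun_prop
  have key : ∀ x ∈ Set.Icc 0 (2 * π), ∀ y ∈ Set.Icc 0 (2 * π), g x ^ 2 ≤ g y ^ 2 + I := by
    intro x hx y hy
    have e1 := intervalIntegral.integral_eq_sub_of_hasDerivAt (a := y) (b := x)
      (f := fun z => g z ^ 2) (f' := fun z => 2 * g z * g' z)
      (fun z _ => by simpa using (h z).fun_pow 2)
      ((by fun_prop : Continuous fun z => 2 * g z * g' z).intervalIntegrable _ _)
    have e2 : |∫ z in y..x, 2 * g z * g' z| ≤ |∫ z in y..x, (g z ^ 2 + g' z ^ 2)| := by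
      rw [← Real.norm_eq_abs]
      refine intervalIntegral.norm_integral_le_abs_of_norm_le ?_ (cI.intervalIntegrable _ _)
      refine Filter.Eventually.of_forall fun z => ?_
      rw [Real.norm_eq_abs, abs_le]
      constructor <;> nlinarith [sq_nonneg (g z - g' z), sq_nonneg (g z + g' z)]
    have e3 : |∫ z in y..x, (g z ^ 2 + g' z ^ 2)| ≤ |I| := by
      refine intervalIntegral.abs_integral_mono_interval ?_ ?_ (cI.intervalIntegrable _ _)
      · rw [Set.uIoc_of_le (by linarith : 0 ≤ 2 * π)]
        intro z hz
        rw [Set.mem_uIoc] at hz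
        rcases hz with hz | hz
        · exact ⟨lt_of_le_of_lt hy.1 hz.1, hz.2.trans hx.2⟩
        · exact ⟨lt_of_le_of_lt hx.1 hz.1, hz.2.trans hy.2⟩
      · exact Filter.Eventually.of_forall fun z => by positivity
    have e4 : 0 ≤ I := intervalIntegral.integral_nonneg (by linarith) fun z _ => by positivity
    rw [abs_of_nonneg e4] at e3
    have := (abs_le.1 (e2.trans e3)).2
    linarith
  have key2 : ∀ x ∈ Set.Icc 0 (2 * π), g x ^ 2 ≤ 2 * I := by
    intro x hx
    have h1 : ∫ y in (0 : ℝ)..(2 * π), g x ^ 2 ≤ ∫ y in (0 : ℝ)..(2 * π), (g y ^ 2 + I) :=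
      intervalIntegral.integral_mono_on (by linarith) (by simp)
        ((by fun_prop : Continuous fun y => g y ^ 2 + I).intervalIntegrable _ _)
        fun y hy => key x hx y hy
    have h2 : ∫ y in (0 : ℝ)..(2 * π), (g y ^ 2 + I) ≤
        ∫ y in (0 : ℝ)..(2 * π), ((g y ^ 2 + g' y ^ 2) + I) :=
      intervalIntegral.integral_mono_on (by linarith)
        ((by fun_prop : Continuous fun y => g y ^ 2 + I).intervalIntegrable _ _)
        ((by fun_prop : Continuous fun y => (g y ^ 2 + g' y ^ 2) + I).intervalIntegrable _ _)
        fun y hy => by nlinarith [sq_nonneg (g' y)]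
    rw [intervalIntegral.integral_add (cI.intervalIntegrable _ _) (by simp), ← hI] at h2
    simp only [intervalIntegral.integral_const, smul_eq_mul, sub_zero] at h1 h2
    have e4 : 0 ≤ I := intervalIntegral.integral_nonneg (by linarith) fun z _ => by positivity
    have : 2 * π * (g x ^ 2) ≤ 2 * π * (2 * I) := by nlinarith
    exact le_of_mul_le_mul_left this (by linarith)
  have hP : Function.Periodic g (2 * π) := hper
  obtain ⟨y, hy, hxy⟩ := hP.exists_mem_Ico₀ (by linarith) x
  rw [hxy]
  exact key2 y ⟨hy.1, hy.2.le⟩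

section energy
variable {ε : ℝ} {a b c d e f A B C : ℝ → ℝ}

lemma flux0 (ha : ∀ x, HasDerivAt a (b x) x) (hb : ∀ x, HasDerivAt b (c x) x)
    (hc : ∀ x, HasDerivAt c (d x) x) (cd : Continuous d)
    (pa : a (2 * π) = a 0) (pb : b (2 * π) = b 0) (pc : c (2 * π) = c 0)
    (hA : ∀ x, A x = -d x + ε * c x + 3 * a x ^ 2 * b x) :
    ∫ x in (0 : ℝ)..(2 * π), a x * A x = - ∫ x in (0 : ℝ)..(2 * π), ε * b x ^ 2 := by
  have ca : Continuous a := continuous_iff_continuousAt.2 fun x => (ha x).continuousAt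
  have cb : Continuous b := continuous_iff_continuousAt.2 fun x => (hb x).continuousAt
  have cc : Continuous c := continuous_iff_continuousAt.2 fun x => (hc x).continuousAt
  simp only [hA]
  refine int_flux (G := fun x => -(a x * c x) + b x ^ 2 / 2 + 3 / 4 * a x ^ 4 + ε * (a x * b x))
    (by fun_prop) (by fun_prop) (fun x => ?_) (by simp only [pa, pb, pc])
  have := (((((ha x).fun_mul (hc x)).fun_neg).fun_add (((hb x).fun_pow 2).div_const 2)).fun_add
    (((ha x).fun_pow 4).const_mul (3 / 4))).fun_add (((ha x).fun_mul (hb x)).const_mul ε)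
  refine this.congr_deriv ?_
  norm_num
  ring

lemma flux1 (ha : ∀ x, HasDerivAt a (b x) x) (hb : ∀ x, HasDerivAt b (c x) x)
    (hc : ∀ x, HasDerivAt c (d x) x) (hd : ∀ x, HasDerivAt d (e x) x) (ce : Continuous e)
    (pa : a (2 * π) = a 0) (pb : b (2 * π) = b 0) (pc : c (2 * π) = c 0) (pd : d (2 * π) = d 0)
    (hA : ∀ x, A x = -d x + ε * c x + 3 * a x ^ 2 * b x)
    (hB : ∀ x, B x = -e x + ε * d x + 6 * a x * b x ^ 2 + 3 * a x ^ 2 * c x) :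
    ∫ x in (0 : ℝ)..(2 * π), (b x * B x + a x ^ 3 * A x) =
      - ∫ x in (0 : ℝ)..(2 * π), ε * (c x ^ 2 + 3 * a x ^ 2 * b x ^ 2) := by
  have ca : Continuous a := continuous_iff_continuousAt.2 fun x => (ha x).continuousAt
  have cb : Continuous b := continuous_iff_continuousAt.2 fun x => (hb x).continuousAt
  have cc : Continuous c := continuous_iff_continuousAt.2 fun x => (hc x).continuousAt
  have cd : Continuous d := continuous_iff_continuousAt.2 fun x => (hd x).continuousAt
  simp only [hA, hB]
  refine int_flux (G := fun x => -(b x * d x) + c x ^ 2 / 2 + 3 * (a x ^ 2 * b x ^ 2)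
      + -(a x ^ 3 * c x) + a x ^ 6 / 2 + ε * (b x * c x + a x ^ 3 * b x))
    (by fun_prop) (by fun_prop) (fun x => ?_) (by simp only [pa, pb, pc, pd])
  have := (((((((hb x).fun_mul (hd x)).fun_neg).fun_add (((hc x).fun_pow 2).div_const 2)).fun_add
    ((((ha x).fun_pow 2).fun_mul ((hb x).fun_pow 2)).const_mul 3)).fun_add
    ((((ha x).fun_pow 3).fun_mul (hc x)).fun_neg)).fun_add (((ha x).fun_pow 6).div_const 2)).fun_add
    ((((hb x).fun_mul (hc x)).fun_add (((ha x).fun_pow 3).fun_mul (hb x))).const_mul ε)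
  refine this.congr_deriv ?_
  norm_num
  ring

lemma flux2 (ha : ∀ x, HasDerivAt a (b x) x) (hb : ∀ x, HasDerivAt b (c x) x)
    (hc : ∀ x, HasDerivAt c (d x) x) (hd : ∀ x, HasDerivAt d (e x) x)
    (he : ∀ x, HasDerivAt e (f x) x) (cf : Continuous f)
    (pa : a (2 * π) = a 0) (pb : b (2 * π) = b 0) (pc : c (2 * π) = c 0) (pd : d (2 * π) = d 0)
    (pe : e (2 * π) = e 0)
    (hA : ∀ x, A x = -d x + ε * c x + 3 * a x ^ 2 * b x)
    (hB : ∀ x, B x = -e x + ε * d x + 6 * a x * b x ^ 2 + 3 * a x ^ 2 * c x)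
    (hC : ∀ x, C x = -f x + ε * e x + 6 * b x ^ 3 + 18 * a x * b x * c x + 3 * a x ^ 2 * d x) :
    ∫ x in (0 : ℝ)..(2 * π), (c x * C x + 5 * (a x * b x ^ 2 * A x + a x ^ 2 * b x * B x)
        + 3 / 2 * a x ^ 5 * A x) =
      - ∫ x in (0 : ℝ)..(2 * π), ε * (d x ^ 2 + 5 * a x ^ 2 * c x ^ 2 + 10 * a x * b x ^ 2 * c x
        + 5 / 3 * b x ^ 4 + 15 / 2 * a x ^ 4 * b x ^ 2) := by
  have ca : Continuous a := continuous_iff_continuousAt.2 fun x => (ha x).continuousAt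
  have cb : Continuous b := continuous_iff_continuousAt.2 fun x => (hb x).continuousAt
  have cc : Continuous c := continuous_iff_continuousAt.2 fun x => (hc x).continuousAt
  have cd : Continuous d := continuous_iff_continuousAt.2 fun x => (hd x).continuousAt
  have ce : Continuous e := continuous_iff_continuousAt.2 fun x => (he x).continuousAt
  simp only [hA, hB, hC]
  refine int_flux (G := fun x => -(c x * e x) + d x ^ 2 / 2 + 1 / 4 * b x ^ 4
      + 4 * (a x ^ 2 * c x ^ 2) + -5 * (a x ^ 2 * b x * d x) + 5 * (a x * b x ^ 2 * c x)
      + -(3 / 2) * (a x ^ 5 * c x) + 45 / 4 * (a x ^ 4 * b x ^ 2) + 9 / 16 * a x ^ 8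
      + ε * (c x * d x + 5 * (a x ^ 2 * b x * c x) + 3 / 2 * (a x ^ 5 * b x)
        + 5 / 3 * (a x * b x ^ 3)))
    (by fun_prop) (by fun_prop) (fun x => ?_) (by simp only [pa, pb, pc, pd, pe])
  have t1 := ((hc x).fun_mul (he x)).fun_neg
  have t2 := ((hd x).fun_pow 2).div_const 2
  have t3 := ((hb x).fun_pow 4).const_mul (1 / 4)
  have t4 := (((ha x).fun_pow 2).fun_mul ((hc x).fun_pow 2)).const_mul 4
  have t5 := ((((ha x).fun_pow 2).fun_mul (hb x)).fun_mul (hd x)).const_mul (-5)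
  have t6 := (((ha x).fun_mul ((hb x).fun_pow 2)).fun_mul (hc x)).const_mul 5
  have t7 := (((ha x).fun_pow 5).fun_mul (hc x)).const_mul (-(3 / 2))
  have t8 := (((ha x).fun_pow 4).fun_mul ((hb x).fun_pow 2)).const_mul (45 / 4)
  have t9 := ((ha x).fun_pow 8).const_mul (9 / 16)
  have s1 := (hc x).fun_mul (hd x)
  have s2 := ((((ha x).fun_pow 2).fun_mul (hb x)).fun_mul (hc x)).const_mul 5
  have s3 := (((ha x).fun_pow 5).fun_mul (hb x)).const_mul (3 / 2)
  have s4 := ((ha x).fun_mul ((hb x).fun_pow 3)).const_mul (5 / 3)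
  have := ((((((((t1.fun_add t2).fun_add t3).fun_add t4).fun_add t5).fun_add t6).fun_add
    t7).fun_add t8).fun_add t9).fun_add ((((s1.fun_add s2).fun_add s3).fun_add s4).const_mul ε)
  refine this.congr_deriv ?_
  norm_num
  ring

end energy

lemma anti {T : ℝ} {F F' : ℝ → ℝ} (h : ∀ t, HasDerivAt F (F' t) t)
    (h0 : ∀ t ∈ Set.Icc 0 T, F' t ≤ 0) : ∀ t ∈ Set.Icc 0 T, F t ≤ F 0 := by
  intro t ht
  have := antitoneOn_of_deriv_nonpos (convex_Icc 0 T) (f := F)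
    (continuous_iff_continuousAt.2 fun x => (h x).continuousAt).continuousOn
    (fun x _ => (h x).differentiableAt.differentiableWithinAt)
    (fun x hx => by rw [(h x).deriv]; exact h0 x (interior_subset hx))
  exact this ⟨le_rfl, ht.1.trans ht.2⟩ ht ht.1

lemma imono {P Q : ℝ → ℝ} (hP : Continuous P) (hQ : Continuous Q) (h : ∀ x, P x ≤ Q x) :
    ∫ x in (0 : ℝ)..(2 * π), P x ≤ ∫ x in (0 : ℝ)..(2 * π), Q x :=
  intervalIntegral.integral_mono_on (by have := Real.pi_pos; linarith)
    (hP.intervalIntegrable _ _) (hQ.intervalIntegrable _ _) fun x _ => h x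

lemma icomb {X Y Z : ℝ → ℝ} (hX : Continuous X) (hY : Continuous Y) (hZ : Continuous Z) (K : ℝ) :
    ∫ x in (0 : ℝ)..(2 * π), (X x + (K * Y x + Z x)) = (∫ x in (0 : ℝ)..(2 * π), X x) +
      (K * (∫ x in (0 : ℝ)..(2 * π), Y x) + ∫ x in (0 : ℝ)..(2 * π), Z x) := by
  rw [intervalIntegral.integral_add (hX.intervalIntegrable _ _)
    ((by fun_prop : Continuous fun x => K * Y x + Z x).intervalIntegrable _ _),
    intervalIntegral.integral_add ((by fun_prop : Continuous fun x => K * Y x).intervalIntegrable _ _)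
    (hZ.intervalIntegrable _ _), intervalIntegral.integral_const_mul]

lemma inonneg {P : ℝ → ℝ} (h : ∀ x, 0 ≤ P x) : 0 ≤ ∫ x in (0 : ℝ)..(2 * π), P x :=
  intervalIntegral.integral_nonneg (by have := Real.pi_pos; linarith) fun x _ => h x

set_option maxHeartbeats 1600000 in
lemma core_s18 {T R ε : ℝ} (hT : 0 < T) (hR : 0 < R) (hε : 0 < ε) (hε1 : ε ≤ 1)
    {a b c d e f A B C : ℝ × ℝ → ℝ}
    (ca : Continuous a) (cb : Continuous b) (cc : Continuous c) (cd : Continuous d)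
    (ce : Continuous e) (cf : Continuous f) (cA : Continuous A) (cB : Continuous B)
    (cC : Continuous C)
    (pa : Per a) (pb : Per b) (pc : Per c) (pd : Per d) (pe : Per e)
    (ha : ∀ t x, HasDerivAt (fun y => a (t, y)) (b (t, x)) x)
    (hb : ∀ t x, HasDerivAt (fun y => b (t, y)) (c (t, x)) x)
    (hc : ∀ t x, HasDerivAt (fun y => c (t, y)) (d (t, x)) x)
    (hd : ∀ t x, HasDerivAt (fun y => d (t, y)) (e (t, x)) x)
    (he : ∀ t x, HasDerivAt (fun y => e (t, y)) (f (t, x)) x)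
    (ta : ∀ t x, HasDerivAt (fun s => a (s, x)) (A (t, x)) t)
    (tb : ∀ t x, HasDerivAt (fun s => b (s, x)) (B (t, x)) t)
    (tc : ∀ t x, HasDerivAt (fun s => c (s, x)) (C (t, x)) t)
    (hA : ∀ t ∈ Set.Icc 0 T, ∀ x, A (t, x) = -d (t, x) + ε * c (t, x)
      + 3 * a (t, x) ^ 2 * b (t, x))
    (hB : ∀ t ∈ Set.Icc 0 T, ∀ x, B (t, x) = -e (t, x) + ε * d (t, x)
      + 6 * a (t, x) * b (t, x) ^ 2 + 3 * a (t, x) ^ 2 * c (t, x))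
    (hC : ∀ t ∈ Set.Icc 0 T, ∀ x, C (t, x) = -f (t, x) + ε * e (t, x) + 6 * b (t, x) ^ 3
      + 18 * a (t, x) * b (t, x) * c (t, x) + 3 * a (t, x) ^ 2 * d (t, x))
    (hini : ∫ x in (0 : ℝ)..(2 * π), (a (0, x) ^ 2 + b (0, x) ^ 2 + c (0, x) ^ 2) ≤ R ^ 2)
    {N K L : ℝ} (hN : N = 4 * R ^ 2 + 2 * R ^ 4) (hK : K = 1 + 10 * N)
    (hL : L = 1 / 2 + 5 / 2 * (2 * R ^ 2) + 1 / 4 * (2 * R ^ 2) ^ 2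
      + K * (1 / 2 + 1 / 4 * (2 * R ^ 2))) :
    (∀ t ∈ Set.Icc 0 T, ∫ x in (0 : ℝ)..(2 * π), (a (t, x) ^ 2 + b (t, x) ^ 2 + c (t, x) ^ 2)
      ≤ 2 * (L * R ^ 2)) ∧
    ε * ∫ τ in (0 : ℝ)..T, ∫ x in (0 : ℝ)..(2 * π),
      (a (τ, x) ^ 2 + b (τ, x) ^ 2 + c (τ, x) ^ 2 + d (τ, x) ^ 2)
      ≤ L * R ^ 2 + T * (2 * (L * R ^ 2)) := by
  have per : ∀ {g : ℝ × ℝ → ℝ}, Per g → ∀ t, g (t, 2 * π) = g (t, 0) := by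
    intro g hg t
    have := hg t 0
    rwa [zero_add] at this
  have h0T : (0 : ℝ) ∈ Set.Icc 0 T := ⟨le_rfl, hT.le⟩
  have hR2 : 0 < R ^ 2 := by positivity
  -- initial bounds
  have i1 : ∫ x in (0 : ℝ)..(2 * π), (a (0, x) ^ 2 + b (0, x) ^ 2) ≤ R ^ 2 :=
    (imono (by fun_prop) (by fun_prop) fun x => by nlinarith [sq_nonneg (c (0, x))]).trans hini
  have s0 : ∀ x, a (0, x) ^ 2 ≤ 2 * R ^ 2 := fun x =>
    (sobolev (g := fun y => a (0, y)) (g' := fun y => b (0, y)) (by fun_prop) (ha 0) (pa 0) x).trans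
      (by linarith)
  -- L2 and H1 energies
  have E0 : ∀ t ∈ Set.Icc 0 T, ∫ x in (0 : ℝ)..(2 * π), a (t, x) ^ 2 / 2 ≤
      ∫ x in (0 : ℝ)..(2 * π), a (0, x) ^ 2 / 2 := by
    refine anti (F := fun t => ∫ x in (0 : ℝ)..(2 * π), a (t, x) ^ 2 / 2)
      (leibniz (P := fun p => a p ^ 2 / 2) (Q := fun p => a p * A p) (by fun_prop) (by fun_prop)
        fun t x => ?_) fun t ht => ?_
    · refine (((ta t x).fun_pow 2).div_const 2).congr_deriv ?_
      norm_num
      ring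
    · have := flux0 (ε := ε) (ha t) (hb t) (hc t) (by fun_prop) (per pa t) (per pb t) (per pc t)
        (hA t ht)
      rw [this, neg_nonpos]
      exact inonneg fun x => by positivity
  have E1 : ∀ t ∈ Set.Icc 0 T, ∫ x in (0 : ℝ)..(2 * π), (b (t, x) ^ 2 / 2 + a (t, x) ^ 4 / 4) ≤
      ∫ x in (0 : ℝ)..(2 * π), (b (0, x) ^ 2 / 2 + a (0, x) ^ 4 / 4) := by
    refine anti (F := fun t => ∫ x in (0 : ℝ)..(2 * π), (b (t, x) ^ 2 / 2 + a (t, x) ^ 4 / 4))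
      (leibniz (P := fun p => b p ^ 2 / 2 + a p ^ 4 / 4) (Q := fun p => b p * B p + a p ^ 3 * A p)
        (by fun_prop) (by fun_prop) fun t x => ?_) fun t ht => ?_
    · refine ((((tb t x).fun_pow 2).div_const 2).fun_add
        (((ta t x).fun_pow 4).div_const 4)).congr_deriv ?_
      norm_num
      ring
    · have := flux1 (ε := ε) (ha t) (hb t) (hc t) (hd t) (by fun_prop) (per pa t) (per pb t)
        (per pc t) (per pd t) (hA t ht) (hB t ht)
      rw [this, neg_nonpos]
      exact inonneg fun x => by positivity
  -- sup bound
  have sN : ∀ t ∈ Set.Icc 0 T, ∀ x, a (t, x) ^ 2 ≤ N := by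
    intro t ht x
    have h1 := sobolev (g := fun y => a (t, y)) (g' := fun y => b (t, y)) (by fun_prop) (ha t)
      (pa t) x
    have h2 : ∫ x in (0 : ℝ)..(2 * π), (a (t, x) ^ 2 + b (t, x) ^ 2) ≤
        ∫ x in (0 : ℝ)..(2 * π), (2 * (a (t, x) ^ 2 / 2) +
          2 * (b (t, x) ^ 2 / 2 + a (t, x) ^ 4 / 4)) :=
      imono (by fun_prop) (by fun_prop) fun x => by
        have : 0 ≤ a (t, x) ^ 4 := by positivity
        linarith
    rw [intervalIntegral.integral_add
      ((by fun_prop : Continuous fun x => 2 * (a (t, x) ^ 2 / 2)).intervalIntegrable _ _)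
      ((by fun_prop : Continuous fun x =>
        2 * (b (t, x) ^ 2 / 2 + a (t, x) ^ 4 / 4)).intervalIntegrable _ _),
      intervalIntegral.integral_const_mul, intervalIntegral.integral_const_mul] at h2
    have h3 : ∫ x in (0 : ℝ)..(2 * π), a (0, x) ^ 2 / 2 ≤
        ∫ x in (0 : ℝ)..(2 * π), 1 / 2 * (a (0, x) ^ 2 + b (0, x) ^ 2) :=
      imono (by fun_prop) (by fun_prop) fun x => by nlinarith [sq_nonneg (b (0, x))]
    have h4 : ∫ x in (0 : ℝ)..(2 * π), (b (0, x) ^ 2 / 2 + a (0, x) ^ 4 / 4) ≤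
        ∫ x in (0 : ℝ)..(2 * π), (1 / 2 + R ^ 2 / 2) * (a (0, x) ^ 2 + b (0, x) ^ 2) :=
      imono (by fun_prop) (by fun_prop) fun x => by
        nlinarith [mul_le_mul_of_nonneg_right (s0 x) (sq_nonneg (a (0, x))),
          mul_nonneg hR2.le (sq_nonneg (b (0, x))), sq_nonneg (a (0, x))]
    rw [intervalIntegral.integral_const_mul] at h3 h4
    have h5 := E0 t ht
    have h6 := E1 t ht
    have h7 := mul_le_mul_of_nonneg_left i1 (by positivity : 0 ≤ 1 / 2 + R ^ 2 / 2)
    rw [hN]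
    nlinarith
  have hN0 : 0 ≤ N := by rw [hN]; positivity
  have hK1 : 1 ≤ K := by linarith
  -- main functional
  let P : ℝ × ℝ → ℝ := fun p => c p ^ 2 / 2 + 5 / 2 * (a p ^ 2 * b p ^ 2) + a p ^ 6 / 4
    + K * (b p ^ 2 / 2 + a p ^ 4 / 4) + a p ^ 2 / 2
  let Q : ℝ × ℝ → ℝ := fun p => (c p * C p + 5 * (a p * b p ^ 2 * A p + a p ^ 2 * b p * B p)
    + 3 / 2 * a p ^ 5 * A p) + (K * (b p * B p + a p ^ 3 * A p) + a p * A p)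
  have cP : Continuous P := by fun_prop
  have cQ : Continuous Q := by fun_prop
  have dP := leibniz (P := P) (Q := Q) cP cQ fun t x => by
    refine ((((((tc t x).fun_pow 2).div_const 2).fun_add
      ((((ta t x).fun_pow 2).fun_mul ((tb t x).fun_pow 2)).const_mul (5 / 2))).fun_add
      (((ta t x).fun_pow 6).div_const 4)).fun_add (((((tb t x).fun_pow 2).div_const 2).fun_add
        (((ta t x).fun_pow 4).div_const 4)).const_mul K)).fun_add
      (((ta t x).fun_pow 2).div_const 2) |>.congr_deriv ?_
    simp only [Q]
    norm_num
    ring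
  let h : ℝ → ℝ := fun t => ∫ x in (0 : ℝ)..(2 * π), (b (t, x) ^ 2 + c (t, x) ^ 2 + d (t, x) ^ 2)
  have ch : Continuous h := cont_int (P := fun p => b p ^ 2 + c p ^ 2 + d p ^ 2) (by fun_prop)
  have hh0 : ∀ t, 0 ≤ h t := fun t => inonneg fun x => by positivity
  have hQ : ∀ t ∈ Set.Icc 0 T, ∫ x in (0 : ℝ)..(2 * π), Q (t, x) ≤ - (ε * h t) := by
    intro t ht
    have f0 := flux0 (ε := ε) (ha t) (hb t) (hc t) (by fun_prop) (per pa t) (per pb t) (per pc t)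
      (hA t ht)
    have f1 := flux1 (ε := ε) (ha t) (hb t) (hc t) (hd t) (by fun_prop) (per pa t) (per pb t)
      (per pc t) (per pd t) (hA t ht) (hB t ht)
    have f2 := flux2 (ε := ε) (ha t) (hb t) (hc t) (hd t) (he t) (by fun_prop) (per pa t)
      (per pb t) (per pc t) (per pd t) (per pe t) (hA t ht) (hB t ht) (hC t ht)
    simp only [Q, h]
    rw [icomb (X := fun x => c (t, x) * C (t, x) + 5 * (a (t, x) * b (t, x) ^ 2 * A (t, x)
        + a (t, x) ^ 2 * b (t, x) * B (t, x)) + 3 / 2 * a (t, x) ^ 5 * A (t, x))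
      (Y := fun x => b (t, x) * B (t, x) + a (t, x) ^ 3 * A (t, x))
      (Z := fun x => a (t, x) * A (t, x)) (by fun_prop) (by fun_prop) (by fun_prop) K, f0, f1, f2]
    have : ∫ x in (0 : ℝ)..(2 * π), ε * (b (t, x) ^ 2 + c (t, x) ^ 2 + d (t, x) ^ 2) ≤
        ∫ x in (0 : ℝ)..(2 * π), ((ε * (d (t, x) ^ 2 + 5 * a (t, x) ^ 2 * c (t, x) ^ 2
          + 10 * a (t, x) * b (t, x) ^ 2 * c (t, x)
          + 5 / 3 * b (t, x) ^ 4 + 15 / 2 * a (t, x) ^ 4 * b (t, x) ^ 2)) +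
          (K * (ε * (c (t, x) ^ 2 + 3 * a (t, x) ^ 2 * b (t, x) ^ 2)) + ε * b (t, x) ^ 2)) := by
      refine imono (by fun_prop) (by fun_prop) fun x => ?_
      have k1 : b (t, x) ^ 2 + c (t, x) ^ 2 + d (t, x) ^ 2 ≤
          (d (t, x) ^ 2 + 5 * a (t, x) ^ 2 * c (t, x) ^ 2
          + 10 * a (t, x) * b (t, x) ^ 2 * c (t, x)
          + 5 / 3 * b (t, x) ^ 4 + 15 / 2 * a (t, x) ^ 4 * b (t, x) ^ 2) +
          (K * (c (t, x) ^ 2 + 3 * a (t, x) ^ 2 * b (t, x) ^ 2) + b (t, x) ^ 2) := by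
        have k2 := mul_le_mul_of_nonneg_right (sN t ht x) (sq_nonneg (c (t, x)))
        have k3 := sq_nonneg (b (t, x) ^ 2 + 3 * (a (t, x) * c (t, x)))
        have k4 : 0 ≤ K * (3 * a (t, x) ^ 2 * b (t, x) ^ 2) := by positivity
        have k5 : 0 ≤ a (t, x) ^ 4 * b (t, x) ^ 2 := by positivity
        rw [mul_add, hK] at *
        nlinarith
      have := mul_le_mul_of_nonneg_left k1 hε.le
      linarith
    rw [icomb (X := fun x => ε * (d (t, x) ^ 2 + 5 * a (t, x) ^ 2 * c (t, x) ^ 2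
          + 10 * a (t, x) * b (t, x) ^ 2 * c (t, x)
          + 5 / 3 * b (t, x) ^ 4 + 15 / 2 * a (t, x) ^ 4 * b (t, x) ^ 2))
      (Y := fun x => ε * (c (t, x) ^ 2 + 3 * a (t, x) ^ 2 * b (t, x) ^ 2))
      (Z := fun x => ε * b (t, x) ^ 2) (by fun_prop) (by fun_prop) (by fun_prop) K,
      intervalIntegral.integral_const_mul ε
        (fun x => b (t, x) ^ 2 + c (t, x) ^ 2 + d (t, x) ^ 2)] at this
    linarith
  have P0 : ∫ x in (0 : ℝ)..(2 * π), P (0, x) ≤ L * R ^ 2 := by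
    have hL0 : 0 ≤ L := by rw [hL]; positivity
    have : ∫ x in (0 : ℝ)..(2 * π), P (0, x) ≤
        ∫ x in (0 : ℝ)..(2 * π), L * (a (0, x) ^ 2 + b (0, x) ^ 2 + c (0, x) ^ 2) := by
      refine imono (by fun_prop) (by fun_prop) fun x => ?_
      have k0 := s0 x
      simp only [P]
      generalize a (0, x) = p at *
      generalize b (0, x) = q at *
      generalize c (0, x) = r at *
      have k1 := mul_le_mul_of_nonneg_right k0 (sq_nonneg p)
      have k2 := mul_le_mul_of_nonneg_right k0 (sq_nonneg q)
      have k3 : p ^ 6 ≤ (2 * R ^ 2) ^ 2 * p ^ 2 := by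
        have := mul_le_mul_of_nonneg_right (pow_le_pow_left₀ (sq_nonneg p) k0 2) (sq_nonneg p)
        nlinarith
      have k4 : K * p ^ 4 ≤ K * (2 * R ^ 2 * p ^ 2) :=
        mul_le_mul_of_nonneg_left (by nlinarith) (by linarith)
      have m1 : 0 ≤ R ^ 2 * p ^ 2 := by positivity
      have m2 : 0 ≤ R ^ 2 * r ^ 2 := by positivity
      have m3 : 0 ≤ (R ^ 2) ^ 2 * (q ^ 2 + r ^ 2) := by positivity
      have m4 : 0 ≤ K * (p ^ 2 + r ^ 2) := by positivity
      have m5 : 0 ≤ K * (R ^ 2 * (q ^ 2 + r ^ 2)) := by positivity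
      have m6 := sq_nonneg q
      rw [hL]
      linarith
    rw [intervalIntegral.integral_const_mul] at this
    exact this.trans (mul_le_mul_of_nonneg_left hini hL0)
  have main : ∀ t ∈ Set.Icc 0 T, (∫ x in (0 : ℝ)..(2 * π), P (t, x)) + ε * ∫ τ in (0 : ℝ)..t, h τ
      ≤ L * R ^ 2 := by
    intro t ht
    have := anti (T := T)
      (F := fun t => (∫ x in (0 : ℝ)..(2 * π), P (t, x)) + ε * ∫ τ in (0 : ℝ)..t, h τ)
      (fun t => (dP t).fun_add ((ch.integral_hasStrictDerivAt 0 t).hasDerivAt.const_mul ε))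
      (fun t ht => by have := hQ t ht; linarith) t ht
    simp only [intervalIntegral.integral_same, mul_zero, add_zero] at this
    exact this.trans P0
  have lowP : ∀ t x, 1 / 2 * (a (t, x) ^ 2 + b (t, x) ^ 2 + c (t, x) ^ 2) ≤ P (t, x) := by
    intro t x
    simp only [P]
    have k1 := mul_le_mul_of_nonneg_right hK1
      (by positivity : 0 ≤ b (t, x) ^ 2 / 2 + a (t, x) ^ 4 / 4)
    have k2 : 0 ≤ a (t, x) ^ 4 := by positivity
    have k3 : 0 ≤ a (t, x) ^ 6 := by positivity
    have k4 : 0 ≤ a (t, x) ^ 2 * b (t, x) ^ 2 := by positivity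
    linarith
  have res1 : ∀ t ∈ Set.Icc 0 T, ∫ x in (0 : ℝ)..(2 * π),
      (a (t, x) ^ 2 + b (t, x) ^ 2 + c (t, x) ^ 2) ≤ 2 * (L * R ^ 2) := by
    intro t ht
    have k1 := imono (by fun_prop) (by fun_prop) (lowP t)
    rw [intervalIntegral.integral_const_mul] at k1
    have k2 : 0 ≤ ε * ∫ τ in (0 : ℝ)..t, h τ :=
      mul_nonneg hε.le (intervalIntegral.integral_nonneg ht.1 fun τ _ => hh0 τ)
    have := main t ht
    linarith
  refine ⟨res1, ?_⟩
  have mT := main T ⟨hT.le, le_rfl⟩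
  have PT : 0 ≤ ∫ x in (0 : ℝ)..(2 * π), P (T, x) :=
    inonneg fun x => le_trans (by positivity) (lowP T x)
  have k1 : ∫ τ in (0 : ℝ)..T, ∫ x in (0 : ℝ)..(2 * π),
      (a (τ, x) ^ 2 + b (τ, x) ^ 2 + c (τ, x) ^ 2 + d (τ, x) ^ 2) ≤
      ∫ τ in (0 : ℝ)..T, (2 * (L * R ^ 2) + h τ) := by
    refine intervalIntegral.integral_mono_on hT.le
      ((cont_int (P := fun p => a p ^ 2 + b p ^ 2 + c p ^ 2 + d p ^ 2)
        (by fun_prop)).intervalIntegrable _ _)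
      ((continuous_const.add ch).intervalIntegrable _ _) fun τ hτ => ?_
    have j1 := res1 τ hτ
    have j2 : ∫ x in (0 : ℝ)..(2 * π),
        (a (τ, x) ^ 2 + b (τ, x) ^ 2 + c (τ, x) ^ 2 + d (τ, x) ^ 2) ≤ ∫ x in (0 : ℝ)..(2 * π),
        ((a (τ, x) ^ 2 + b (τ, x) ^ 2 + c (τ, x) ^ 2) +
          (b (τ, x) ^ 2 + c (τ, x) ^ 2 + d (τ, x) ^ 2)) :=
      imono (by fun_prop) (by fun_prop) fun x => by
        nlinarith [sq_nonneg (b (τ, x)), sq_nonneg (c (τ, x))]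
    rw [intervalIntegral.integral_add
      (f := fun x => a (τ, x) ^ 2 + b (τ, x) ^ 2 + c (τ, x) ^ 2)
      (g := fun x => b (τ, x) ^ 2 + c (τ, x) ^ 2 + d (τ, x) ^ 2)
      (Continuous.intervalIntegrable (by fun_prop) _ _)
      (Continuous.intervalIntegrable (by fun_prop) _ _)] at j2
    simp only [h]
    linarith
  rw [intervalIntegral.integral_add (by simp) (ch.intervalIntegrable _ _)] at k1
  simp only [intervalIntegral.integral_const, smul_eq_mul, sub_zero] at k1
  have k2 := mul_le_mul_of_nonneg_left k1 hε.le
  have k3 : 0 ≤ T * (2 * (L * R ^ 2)) :=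
    mul_nonneg hT.le (le_trans (inonneg fun x => by positivity) (res1 0 h0T))
  nlinarith [mul_le_mul_of_nonneg_right hε1 k3]

open Real in
theorem stmt18 (T R : ℝ) (hT : 0 < T) (hR : 0 < R) :
    ∃ C : ℝ, 0 < C ∧
      ∀ ε : ℝ, ε ∈ Set.Ioc (0 : ℝ) 1 →
        ∀ u : ℝ → ℝ → ℝ,
          ContDiff ℝ (⊤ : ℕ∞) (fun p : ℝ × ℝ => u p.1 p.2) →
          (∀ t x : ℝ, u t (x + 2 * π) = u t x) →
          (∀ t ∈ Set.Icc (0 : ℝ) T, ∀ x : ℝ,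
            deriv (fun τ => u τ x) t + iteratedDeriv 3 (u t) x -
                ε * iteratedDeriv 2 (u t) x =
              deriv (fun y => (u t y) ^ 3) x) →
          (∫ x in (0 : ℝ)..(2 * π),
              ((u 0 x) ^ 2 + (deriv (u 0) x) ^ 2 + (iteratedDeriv 2 (u 0) x) ^ 2)) ≤ R ^ 2 →
          ∀ t ∈ Set.Icc (0 : ℝ) T,
            Real.sqrt (∫ x in (0 : ℝ)..(2 * π),
                ((u t x) ^ 2 + (deriv (u t) x) ^ 2 + (iteratedDeriv 2 (u t) x) ^ 2)) +
                Real.sqrt ε *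
                  Real.sqrt (∫ τ in (0 : ℝ)..T, ∫ x in (0 : ℝ)..(2 * π),
                    ((u τ x) ^ 2 + (deriv (u τ) x) ^ 2 + (iteratedDeriv 2 (u τ) x) ^ 2 +
                      (iteratedDeriv 3 (u τ) x) ^ 2)) ≤ C := by
  obtain ⟨N, hN⟩ : ∃ N : ℝ, N = 4 * R ^ 2 + 2 * R ^ 4 := ⟨_, rfl⟩
  obtain ⟨K, hK⟩ : ∃ K : ℝ, K = 1 + 10 * N := ⟨_, rfl⟩
  obtain ⟨L, hL⟩ : ∃ L : ℝ, L = 1 / 2 + 5 / 2 * (2 * R ^ 2) + 1 / 4 * (2 * R ^ 2) ^ 2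
      + K * (1 / 2 + 1 / 4 * (2 * R ^ 2)) := ⟨_, rfl⟩
  have hN0 : 0 < N := by rw [hN]; positivity
  have hK0 : 0 < K := by rw [hK]; positivity
  have hL0 : 0 < L := by rw [hL]; positivity
  refine ⟨√(2 * (L * R ^ 2)) + √(L * R ^ 2 + T * (2 * (L * R ^ 2))), by positivity, ?_⟩
  rintro ε ⟨hε, hε1⟩ u hu hper heq hini t ht
  obtain ⟨a, rfl⟩ : ∃ a : ℝ × ℝ → ℝ, u = fun t x => a (t, x) := ⟨fun p => u p.1 p.2, rfl⟩
  have sa : Sm a := hu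
  have pa : Per a := hper
  have e1 : ∀ t, deriv (fun x => a (t, x)) = fun x => dX a (t, x) := fun t => by
    funext x; exact (sa.hX t x).deriv
  have e2 : ∀ t, iteratedDeriv 2 (fun x => a (t, x)) = fun x => dX (dX a) (t, x) := fun t => by
    funext x
    rw [iteratedDeriv_succ, iteratedDeriv_one, e1]
    exact (sa.dX.hX t x).deriv
  have e3 : ∀ t, iteratedDeriv 3 (fun x => a (t, x)) = fun x => dX (dX (dX a)) (t, x) := fun t => by
    funext x
    rw [iteratedDeriv_succ, e2]
    exact (sa.dX.dX.hX t x).deriv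
  simp only [e1, e2, e3] at hini heq ⊢
  have ha := sa.hX
  have hb := sa.dX.hX
  have hc := sa.dX.dX.hX
  have hd := sa.dX.dX.dX.hX
  have he := sa.dX.dX.dX.dX.hX
  have hA : ∀ t ∈ Set.Icc 0 T, ∀ x, dT a (t, x) = -dX (dX (dX a)) (t, x) + ε * dX (dX a) (t, x)
      + 3 * a (t, x) ^ 2 * dX a (t, x) := by
    intro t ht x
    have h1 := heq t ht x
    rw [(sa.hT t x).deriv, ((ha t x).fun_pow 3).deriv] at h1
    norm_num at h1
    linarith
  have hB : ∀ t ∈ Set.Icc 0 T, ∀ x, dX (dT a) (t, x) = -dX (dX (dX (dX a))) (t, x)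
      + ε * dX (dX (dX a)) (t, x)
      + 6 * a (t, x) * dX a (t, x) ^ 2 + 3 * a (t, x) ^ 2 * dX (dX a) (t, x) := by
    intro t ht x
    have h1 := sa.dT.hX t x
    rw [show (fun y => dT a (t, y)) = _ from funext (hA t ht)] at h1
    rw [h1.unique ((((hd t x).fun_neg).fun_add ((hc t x).const_mul ε)).fun_add
      ((((ha t x).fun_pow 2).const_mul 3).fun_mul (hb t x)))]
    norm_num
    ring
  have hC : ∀ t ∈ Set.Icc 0 T, ∀ x, dX (dX (dT a)) (t, x) = -dX (dX (dX (dX (dX a)))) (t, x)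
      + ε * dX (dX (dX (dX a))) (t, x) + 6 * dX a (t, x) ^ 3
      + 18 * a (t, x) * dX a (t, x) * dX (dX a) (t, x)
      + 3 * a (t, x) ^ 2 * dX (dX (dX a)) (t, x) := by
    intro t ht x
    have h1 := sa.dT.dX.hX t x
    rw [show (fun y => dX (dT a) (t, y)) = _ from funext (hB t ht)] at h1
    rw [h1.unique (((((he t x).fun_neg).fun_add ((hd t x).const_mul ε)).fun_add
      (((ha t x).const_mul 6).fun_mul ((hb t x).fun_pow 2))).fun_add
      ((((ha t x).fun_pow 2).const_mul 3).fun_mul (hc t x)))]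
    norm_num
    ring
  obtain ⟨r1, r2⟩ := core_s18 hT hR hε hε1 sa.continuous sa.dX.continuous sa.dX.dX.continuous
    sa.dX.dX.dX.continuous sa.dX.dX.dX.dX.continuous sa.dX.dX.dX.dX.dX.continuous
    sa.dT.continuous sa.dT.dX.continuous sa.dT.dX.dX.continuous
    pa pa.dX pa.dX.dX pa.dX.dX.dX pa.dX.dX.dX.dX ha hb hc hd he sa.hT
    (by rw [← sa.comm]; exact sa.dX.hT) (by rw [← sa.comm, ← sa.dX.comm]; exact sa.dX.dX.hT)
    hA hB hC hini hN hK hL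
  refine add_le_add (Real.sqrt_le_sqrt (r1 t ht)) ?_
  rw [← Real.sqrt_mul hε.le]
  exact Real.sqrt_le_sqrt r2
end
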